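/- Z-norm comparison of M and T₃ (Lemma 3.3(i), estimate (pi21)): For every h ∈ L∞(I_δ), one has ‖(M − T_{3,(f,g)})h‖_Z + ‖(M − T_{3,(g,f)})h‖_Z ≲ ε·log(1/ε)·‖h‖_{L∞(I_{2√ε})}. -/

import Mathlib

noncomputable section
open Set MeasureTheory Filter Real

/-- The principal value at `α` of the integral `∫_ℝ F(β) dβ`, understood as the limit of the
integrals over `{β : r < |α − β|}` as `r → 0⁺`. -/
def pvI (F : ℝ → ℝ) (α : ℝ) : ℝ :=
  limUnder (nhdsWithin (0:ℝ) (Ioi 0)) (fun r => ∫ β in {β : ℝ | r < |α - β|}, F β)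

/-- `ψ` is a smooth even cutoff, with values in `[0,1]`, supported in `[−1,1]`,
equal to `1` on `[−1/2,1/2]`. -/
def IsCutoff (ψ : ℝ → ℝ) : Prop :=
  ContDiff ℝ (⊤ : ℕ∞) ψ ∧ (∀ x : ℝ, ψ (-x) = ψ x) ∧ (∀ x : ℝ, ψ x ∈ Icc (0:ℝ) 1) ∧
    (∀ x : ℝ, 1 < |x| → ψ x = 0) ∧ (∀ x : ℝ, |x| ≤ 1/2 → ψ x = 1)

/-- The rescaled cutoff `ψ_r(x) = ψ(x/r)`. -/
def scut (ψ : ℝ → ℝ) (r x : ℝ) : ℝ := ψ (x / r)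

/-- `X̃(α) = 2ε + f(α) + g(α)`. -/
def Xt (ε : ℝ) (f g : ℝ → ℝ) (α : ℝ) : ℝ := 2 * ε + f α + g α

/-- The operator `T_{1,f}`. -/
def T1 (ψ : ℝ → ℝ) (ε : ℝ) (f : ℝ → ℝ) (h : ℝ → ℝ) (α : ℝ) : ℝ :=
  (2 * π)⁻¹ * pvI (fun β =>
    (f α - f β) / ((α - β) ^ 2 + (f α - f β) ^ 2) * h β * scut ψ (Real.sqrt ε) (α - β)) α

/-- The operator `T_{2,f}`. -/
def T2 (ψ : ℝ → ℝ) (ε : ℝ) (f : ℝ → ℝ) (h : ℝ → ℝ) (α : ℝ) : ℝ :=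
  (2 * π)⁻¹ * pvI (fun β =>
    (α - β) / ((α - β) ^ 2 + (f α - f β) ^ 2) * h β * scut ψ (Real.sqrt ε) (α - β)) α

/-- The operator `T_{3,(f,g)}`. -/
def T3 (ψ : ℝ → ℝ) (ε : ℝ) (f g : ℝ → ℝ) (h : ℝ → ℝ) (α : ℝ) : ℝ :=
  (2 * π)⁻¹ * ∫ β : ℝ,
    (2 * ε + f α + g β) / ((α - β) ^ 2 + (2 * ε + f α + g β) ^ 2) * h β *
      scut ψ (Real.sqrt ε) (α - β)

/-- The operator `T_{4,(f,g)}`. -/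
def T4 (ψ : ℝ → ℝ) (ε : ℝ) (f g : ℝ → ℝ) (h : ℝ → ℝ) (α : ℝ) : ℝ :=
  (2 * π)⁻¹ * ∫ β : ℝ,
    (α - β) / ((α - β) ^ 2 + (2 * ε + f α + g β) ^ 2) * h β * scut ψ (Real.sqrt ε) (α - β)

/-- The kernel of the operator `H`. -/
def Hker (ψ : ℝ → ℝ) (ε : ℝ) (f g : ℝ → ℝ) (α β : ℝ) : ℝ :=
  (α - β)⁻¹ * ((Xt ε f g α) ^ 2 / ((α - β) ^ 2 + (Xt ε f g α) ^ 2)) *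
    scut ψ (Real.sqrt ε / 2 ^ 6) α * scut ψ (Real.sqrt ε / 2 ^ 6) (α - β)

/-- The kernel of the operator `M`. -/
def Mker (ψ : ℝ → ℝ) (ε : ℝ) (f g : ℝ → ℝ) (α β : ℝ) : ℝ :=
  (Xt ε f g α) / ((α - β) ^ 2 + (Xt ε f g α) ^ 2) *
    scut ψ (Real.sqrt ε / 2 ^ 6) α * scut ψ (Real.sqrt ε / 2 ^ 6) (α - β)

/-- The operator `H` (a principal value integral in the second variable of the kernel). -/
def Hop (ψ : ℝ → ℝ) (ε : ℝ) (f g : ℝ → ℝ) (h : ℝ → ℝ) (α : ℝ) : ℝ :=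
  (2 * π)⁻¹ * pvI (fun β => Hker ψ ε f g α β * h β) α

/-- The adjoint operator `H*` (integration of the kernel of `H` in its first variable). -/
def Hstar (ψ : ℝ → ℝ) (ε : ℝ) (f g : ℝ → ℝ) (φ : ℝ → ℝ) (β : ℝ) : ℝ :=
  (2 * π)⁻¹ * pvI (fun α => Hker ψ ε f g α β * φ α) β

/-- The operator `M`. -/
def Mop (ψ : ℝ → ℝ) (ε : ℝ) (f g : ℝ → ℝ) (h : ℝ → ℝ) (α : ℝ) : ℝ :=
  (2 * π)⁻¹ * ∫ β : ℝ, Mker ψ ε f g α β * h β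

/-- The adjoint operator `M*` (integration of the kernel of `M` in its first variable). -/
def Mstar (ψ : ℝ → ℝ) (ε : ℝ) (f g : ℝ → ℝ) (φ : ℝ → ℝ) (β : ℝ) : ℝ :=
  (2 * π)⁻¹ * ∫ α : ℝ, Mker ψ ε f g α β * φ α

/-- The class `C₂` of test functions: `C¹` functions compactly supported in `I_δ = (−δ,δ)` with
`|φ⁽ᵏ⁾(α)| ≤ ε/(ε^{2+k} + |α|^{2+k})` on `I_δ` for `k ∈ {0,1}`. -/
def InC2 (δ ε : ℝ) (φ : ℝ → ℝ) : Prop :=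
  ContDiff ℝ 1 φ ∧ HasCompactSupport φ ∧ tsupport φ ⊆ Ioo (-δ) δ ∧
    ∀ α ∈ Ioo (-δ) δ,
      |φ α| ≤ ε / (ε ^ 2 + |α| ^ 2) ∧ |deriv φ α| ≤ ε / (ε ^ 3 + |α| ^ 3)

/-- The standing hypotheses on `f, g : (−δ,δ) → ℝ`: they are `C⁵`, with
`‖f‖_{C³} + ‖g‖_{C³} ≤ A`, `f(0) = f'(0) = g(0) = g'(0) = 0`, and
`f(α) + g(β) ≥ −ε` for `α, β ∈ (−4√ε, 4√ε)`. -/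
def GoodFG (δ A ε : ℝ) (f g : ℝ → ℝ) : Prop :=
  ContDiffOn ℝ 5 f (Ioo (-δ) δ) ∧ ContDiffOn ℝ 5 g (Ioo (-δ) δ) ∧
    f 0 = 0 ∧ g 0 = 0 ∧
    derivWithin f (Ioo (-δ) δ) 0 = 0 ∧ derivWithin g (Ioo (-δ) δ) 0 = 0 ∧
    (∀ x ∈ Ioo (-δ) δ, ∀ i : ℕ, i ≤ 3 →
      |iteratedDerivWithin i f (Ioo (-δ) δ) x| + |iteratedDerivWithin i g (Ioo (-δ) δ) x| ≤ A) ∧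
    (∀ α ∈ Ioo (-(4 * Real.sqrt ε)) (4 * Real.sqrt ε),
      ∀ β ∈ Ioo (-(4 * Real.sqrt ε)) (4 * Real.sqrt ε), -ε ≤ f α + g β)

/-!
Since `H* φ` has mean zero, its pairing with `N := (M - T₃) h` only sees `N α - N 0`. On the
support of `H* φ` the kernel of `M - T₃` moves between `α` and `0` by at most a constant times
`(|α| + ε) (1 / (|β| + ε) + 1 / (|β - α| + ε))`, because `f` and `g` are quadratically flat at `0`
and `f + g ≥ -ε`; integrating in `β` produces the factor `log (1 / ε)`. Symmetrizing the principal
value shows that `H* φ` decays like `ε² / (ε³ + |α|³)`, and `(|α| + ε) ε / (ε³ + |α|³)` is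
dominated by the Poisson kernel `ε / (α² + ε²)`, which has bounded mass.
-/

section Kernels

/-- The Poisson kernel `P_y(x)` of the upper half-plane, without its factor `1 / π`. It is the
kernel of `M` and `T₃`, and `P_ε` bounds the test functions in `C₂`. -/
def poissonKer (y x : ℝ) : ℝ := y / (x ^ 2 + y ^ 2)

/-- The bound `ε / (ε³ + |x|³)` imposed on derivatives of the test functions in `C₂`; `H*φ` decays
at the same rate. -/
def cubicDecay (ε x : ℝ) : ℝ := ε / (ε ^ 3 + |x| ^ 3)

variable {B ε ρ x x' y y' : ℝ}

lemma poissonKer_nonneg (hy : 0 ≤ y) (x : ℝ) : 0 ≤ poissonKer y x := by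
  unfold poissonKer
  positivity

lemma poissonKer_neg (y x : ℝ) : poissonKer y (-x) = poissonKer y x := by
  simp [poissonKer]

lemma poissonKer_le_mul (hε : 0 < ε) (hy : ε ≤ y) (hyB : y ≤ B * ε) (x : ℝ) :
    poissonKer y x ≤ B * poissonKer ε x := by
  unfold poissonKer
  rw [← mul_div_assoc]
  gcongr
  exact (hε.le.trans hy).trans hyB

lemma poissonKer_le_div_sq (hy : 0 ≤ y) (hx : x ≠ 0) : poissonKer y x ≤ y / x ^ 2 := by
  unfold poissonKer
  gcongr
  exact le_add_of_nonneg_right (sq_nonneg y)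

lemma poissonKer_eq_neg_im_inv (y x : ℝ) : poissonKer y x = -((⟨x, y⟩ : ℂ)⁻¹).im := by
  simp [poissonKer, Complex.inv_im, Complex.normSq_apply, sq, neg_div]

lemma poissonKer_eq_inv_mul (hy : 0 < y) (x : ℝ) :
    poissonKer y x = y⁻¹ * (1 + (x / y) ^ 2)⁻¹ := by
  unfold poissonKer
  field_simp
  ring

lemma integrable_poissonKer (hy : 0 < y) : Integrable (poissonKer y) := by
  rw [funext (poissonKer_eq_inv_mul hy)]
  exact (integrable_inv_one_add_sq.comp_div hy.ne').const_mul _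

lemma integral_poissonKer (hy : 0 < y) : ∫ x, poissonKer y x = π := by
  simp_rw [poissonKer_eq_inv_mul hy]
  rw [integral_const_mul, Measure.integral_comp_div (fun x ↦ (1 + x ^ 2)⁻¹) y,
    integral_univ_inv_one_add_sq, abs_of_pos hy, smul_eq_mul, inv_mul_cancel_left₀ hy.ne']

lemma abs_poissonKer_sub_le (hε : 0 < ε) (hy : ε ≤ y) (hy' : ε ≤ y') (x : ℝ) :
    |poissonKer y x - poissonKer y' x| ≤ |y - y'| / (x ^ 2 + ε ^ 2) := by
  have h_cauchy : |x ^ 2 - y * y'| * (x ^ 2 + ε ^ 2) ≤ (x ^ 2 + y ^ 2) * (x ^ 2 + y' ^ 2) := by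
    have hyy' : ε ^ 2 ≤ y * y' := by nlinarith
    have h_abs : |x ^ 2 - y * y'| ≤ x ^ 2 + y * y' :=
      abs_sub_le_iff.2 ⟨by nlinarith [sq_nonneg x], by nlinarith [sq_nonneg x]⟩
    calc |x ^ 2 - y * y'| * (x ^ 2 + ε ^ 2) ≤ (x ^ 2 + y * y') * (x ^ 2 + y * y') := by
          gcongr
          exact (abs_nonneg _).trans h_abs
      _ ≤ (x ^ 2 + y ^ 2) * (x ^ 2 + y' ^ 2) := by nlinarith [sq_nonneg (x * (y - y'))]
  have hy0 : 0 < y := hε.trans_le hy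
  have hy0' : 0 < y' := hε.trans_le hy'
  have h_eq : poissonKer y x - poissonKer y' x =
      (y - y') * ((x ^ 2 - y * y') / ((x ^ 2 + y ^ 2) * (x ^ 2 + y' ^ 2))) := by
    unfold poissonKer
    field_simp
    ring
  rw [h_eq, abs_mul, abs_div, abs_of_pos (by positivity : 0 < (x ^ 2 + y ^ 2) * (x ^ 2 + y' ^ 2)),
    div_eq_mul_inv |y - y'|]
  gcongr
  rwa [inv_eq_one_div, div_le_div_iff₀ (by positivity) (by positivity), one_mul]

lemma abs_mul_poissonKer_sub_le (hε : 0 < ε) (hy : ε ≤ y) (hyB : y ≤ B * ε) (hy' : ε ≤ y')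
    (hyB' : y' ≤ B * ε) (x : ℝ) :
    |y * poissonKer y x - y' * poissonKer y' x| ≤ 2 * B * |y - y'| * poissonKer ε x := by
  have hy0 : 0 < y := hε.trans_le hy
  have hy0' : 0 < y' := hε.trans_le hy'
  have h_eq : y * poissonKer y x - y' * poissonKer y' x =
      (y - y') * (x ^ 2 / (x ^ 2 + y ^ 2) * ((y + y') / (x ^ 2 + y' ^ 2))) := by
    unfold poissonKer
    field_simp
    ring
  have h_left : x ^ 2 / (x ^ 2 + y ^ 2) ≤ 1 := div_le_one_of_le₀ (by nlinarith) (by positivity)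
  have h_right : (y + y') / (x ^ 2 + y' ^ 2) ≤ 2 * (B * ε) / (x ^ 2 + ε ^ 2) := by
    gcongr <;> linarith
  calc |y * poissonKer y x - y' * poissonKer y' x|
      = |y - y'| * (x ^ 2 / (x ^ 2 + y ^ 2) * ((y + y') / (x ^ 2 + y' ^ 2))) := by
        rw [h_eq, abs_mul, abs_of_nonneg (by positivity : 0 ≤ x ^ 2 / (x ^ 2 + y ^ 2) * _)]
    _ ≤ |y - y'| * (1 * (2 * (B * ε) / (x ^ 2 + ε ^ 2))) := by gcongr
    _ = 2 * B * |y - y'| * poissonKer ε x := by unfold poissonKer; ring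

lemma abs_poissonKer_sub_poissonKer_le (hρ : 0 < ρ) (hy : 0 ≤ y) (hx : ρ ≤ |x|)
    (hx' : ρ ≤ |x'|) : |poissonKer y x - poissonKer y x'| ≤ 2 * y * |x - x'| / ρ ^ 3 := by
  have hx0 : 0 < |x| := hρ.trans_le hx
  have hx0' : 0 < |x'| := hρ.trans_le hx'
  have hpos : 0 < x ^ 2 := sq_pos_of_ne_zero (abs_pos.1 hx0)
  have hpos' : 0 < x' ^ 2 := sq_pos_of_ne_zero (abs_pos.1 hx0')
  have h_eq : poissonKer y x - poissonKer y x' =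
      y * ((x' - x) * (x' + x)) / ((x ^ 2 + y ^ 2) * (x' ^ 2 + y ^ 2)) := by
    unfold poissonKer
    rw [div_sub_div _ _ (by positivity) (by positivity)]
    ring
  calc |poissonKer y x - poissonKer y x'|
      = y * (|x' - x| * |x' + x|) / ((x ^ 2 + y ^ 2) * (x' ^ 2 + y ^ 2)) := by
        rw [h_eq, abs_div, abs_mul, abs_mul, abs_of_nonneg hy,
          abs_of_pos (by positivity : 0 < (x ^ 2 + y ^ 2) * (x' ^ 2 + y ^ 2))]
    _ ≤ y * (|x' - x| * (|x'| + |x|)) / (|x| ^ 2 * |x'| ^ 2) := by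
        rw [sq_abs, sq_abs]
        gcongr
        · exact abs_add_le _ _
        · exact le_add_of_nonneg_right (sq_nonneg y)
        · exact le_add_of_nonneg_right (sq_nonneg y)
    _ = y * |x - x'| * (1 / (|x| ^ 2 * |x'|) + 1 / (|x| * |x'| ^ 2)) := by
        rw [abs_sub_comm]
        field_simp
    _ ≤ y * |x - x'| * (1 / (ρ ^ 2 * ρ) + 1 / (ρ * ρ ^ 2)) := by gcongr
    _ = 2 * y * |x - x'| / ρ ^ 3 := by
        field_simp
        ring

lemma norm_inv_sub_inv_le {𝕜 : Type*} [NormedField 𝕜] {z w : 𝕜} (hρ : 0 < ρ) (hz : ρ ≤ ‖z‖)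
    (hw : ρ ≤ ‖w‖) : ‖z⁻¹ - w⁻¹‖ ≤ ‖w - z‖ / ρ ^ 2 := by
  rw [inv_sub_inv (norm_pos_iff.1 (hρ.trans_le hz)) (norm_pos_iff.1 (hρ.trans_le hw)), norm_div,
    norm_mul, sq]
  gcongr

lemma norm_inv_sub_inv_sub_le {𝕜 : Type*} [NormedField 𝕜] {z w z' w' : 𝕜} (hρ : 0 < ρ)
    (hz : ρ ≤ ‖z‖) (hw : ρ ≤ ‖w‖) (hz' : ρ ≤ ‖z'‖) (hw' : ρ ≤ ‖w'‖) :
    ‖(z⁻¹ - w⁻¹) - (z'⁻¹ - w'⁻¹)‖ ≤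
      ‖(w - z) - (w' - z')‖ / ρ ^ 2 + ‖w' - z'‖ * (‖w' - w‖ + ‖z' - z‖) / ρ ^ 3 := by
  have h_inv {u : 𝕜} (hu : ρ ≤ ‖u‖) : ‖u⁻¹‖ ≤ ρ⁻¹ := by
    rw [norm_inv]
    gcongr
  have ne_zero {u : 𝕜} (hu : ρ ≤ ‖u‖) : u ≠ 0 := norm_pos_iff.1 (hρ.trans_le hu)
  have h_eq : (z⁻¹ - w⁻¹) - (z'⁻¹ - w'⁻¹) = ((w - z) - (w' - z')) * (z⁻¹ * w⁻¹) +
      (w' - z') * (z⁻¹ * (w⁻¹ - w'⁻¹) + (z⁻¹ - z'⁻¹) * w'⁻¹) := by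
    field_simp [ne_zero hz, ne_zero hw, ne_zero hz', ne_zero hw']
    ring
  calc ‖(z⁻¹ - w⁻¹) - (z'⁻¹ - w'⁻¹)‖
      ≤ ‖(w - z) - (w' - z')‖ * (‖z⁻¹‖ * ‖w⁻¹‖) +
        ‖w' - z'‖ * (‖z⁻¹‖ * ‖w⁻¹ - w'⁻¹‖ + ‖z⁻¹ - z'⁻¹‖ * ‖w'⁻¹‖) := by
        rw [h_eq]
        refine (norm_add_le _ _).trans ?_
        simp only [norm_mul]
        gcongr
        exact (norm_add_le _ _).trans_eq (by simp only [norm_mul])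
    _ ≤ ‖(w - z) - (w' - z')‖ * (ρ⁻¹ * ρ⁻¹) +
        ‖w' - z'‖ * (ρ⁻¹ * (‖w' - w‖ / ρ ^ 2) + ‖z' - z‖ / ρ ^ 2 * ρ⁻¹) := by
        gcongr
        exacts [h_inv hz, h_inv hw, h_inv hz, norm_inv_sub_inv_le hρ hw hw',
          norm_inv_sub_inv_le hρ hz hz', h_inv hw']
    _ = _ := by
        field_simp

lemma abs_poissonKer_sub_sub_le {u u' : ℝ} (hρ : 0 < ρ) (hx : ρ ≤ |x|) (hx' : ρ ≤ |x'|) :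
    |(poissonKer y x - poissonKer u x) - (poissonKer y' x' - poissonKer u' x')| ≤
      |(u - y) - (u' - y')| / ρ ^ 2 +
        |u' - y'| * (2 * |x' - x| + |u' - u| + |y' - y|) / ρ ^ 3 := by
  have h_re {a : ℝ} (b : ℝ) (ha : ρ ≤ |a|) : ρ ≤ ‖(⟨a, b⟩ : ℂ)‖ :=
    ha.trans (Complex.abs_re_le_norm ⟨a, b⟩)
  have h_vert (a b c : ℝ) : ‖(⟨a, b⟩ - ⟨a, c⟩ : ℂ)‖ = |b - c| := by
    rw [show (⟨a, b⟩ - ⟨a, c⟩ : ℂ) = ((b - c : ℝ) : ℂ) * Complex.I by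
      apply Complex.ext <;> simp, norm_mul, Complex.norm_real, Complex.norm_I, mul_one,
      Real.norm_eq_abs]
  have h_diff : ‖((⟨x, u⟩ - ⟨x, y⟩) - (⟨x', u'⟩ - ⟨x', y'⟩) : ℂ)‖ = |(u - y) - (u' - y')| := by
    rw [← h_vert 0]
    congr 1
    apply Complex.ext <;> simp
  have h_l1 (a b c d : ℝ) : ‖(⟨a, b⟩ - ⟨c, d⟩ : ℂ)‖ ≤ |a - c| + |b - d| :=
    Complex.norm_le_abs_re_add_abs_im _
  calc |(poissonKer y x - poissonKer u x) - (poissonKer y' x' - poissonKer u' x')|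
      = |(((⟨x, y⟩ : ℂ)⁻¹ - (⟨x, u⟩ : ℂ)⁻¹) - ((⟨x', y'⟩ : ℂ)⁻¹ - (⟨x', u'⟩ : ℂ)⁻¹)).im| := by
        simp only [poissonKer_eq_neg_im_inv, Complex.sub_im]
        rw [← abs_neg]
        congr 1
        ring
    _ ≤ _ := (Complex.abs_im_le_norm _).trans
        (norm_inv_sub_inv_sub_le hρ (h_re y hx) (h_re u hx) (h_re y' hx') (h_re u' hx'))
    _ ≤ _ := by
        rw [h_diff, h_vert]
        gcongr _ + _ * ?_ / _
        linarith [h_l1 x' u' x u, h_l1 x' y' x y]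

lemma cubicDecay_nonneg (hε : 0 ≤ ε) (x : ℝ) : 0 ≤ cubicDecay ε x := by
  unfold cubicDecay
  positivity

lemma poissonKer_le_sqrt_mul_cubicDecay (hε : 0 < ε) (hε1 : ε ≤ 1) (hx : |x| ≤ √ε) :
    poissonKer ε x ≤ √ε * cubicDecay ε x := by
  have h_le : ε ≤ √ε := Real.le_sqrt_of_sq_le (by nlinarith)
  unfold poissonKer cubicDecay
  rw [← mul_div_assoc, div_le_div_iff₀ (by positivity) (by positivity), ← sq_abs x]
  have h_cube : |x| ^ 3 ≤ √ε * |x| ^ 2 := by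
    rw [pow_succ']
    gcongr
  nlinarith [pow_pos hε 3, mul_nonneg hε.le (sq_nonneg |x|), mul_le_mul_of_nonneg_right h_le
    (sq_nonneg ε)]

lemma poissonKer_le_four_mul (hε : 0 < ε) (h : |x| ≤ max ε (2 * |x'|)) :
    poissonKer ε x' ≤ 4 * poissonKer ε x := by
  unfold poissonKer
  rw [← mul_div_assoc, div_le_div_iff₀ (by positivity) (by positivity)]
  have h_sq : x ^ 2 ≤ ε ^ 2 + 4 * x' ^ 2 := by
    rw [← sq_abs x, ← sq_abs x']
    rcases le_max_iff.1 h with h | h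
    · nlinarith [abs_nonneg x, sq_nonneg |x'|]
    · nlinarith [abs_nonneg x, sq_nonneg ε]
  nlinarith [sq_nonneg ε]

lemma cubicDecay_le_eight_mul (hε : 0 < ε) (h : |x| ≤ max ε (2 * |x'|)) :
    cubicDecay ε x' ≤ 8 * cubicDecay ε x := by
  unfold cubicDecay
  rw [← mul_div_assoc, div_le_div_iff₀ (by positivity) (by positivity)]
  have h_cube : |x| ^ 3 ≤ ε ^ 3 + 8 * |x'| ^ 3 := by
    rcases le_max_iff.1 h with h | h
    · have := pow_le_pow_left₀ (abs_nonneg x) h 3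
      have : 0 ≤ |x'| ^ 3 := by positivity
      linarith
    · have := pow_le_pow_left₀ (abs_nonneg x) h 3
      have : 0 ≤ ε ^ 3 := by positivity
      nlinarith
  nlinarith [pow_pos hε 3]

lemma abs_add_mul_cubicDecay_le (hε : 0 < ε) (x : ℝ) :
    (|x| + ε) * cubicDecay ε x ≤ 2 * poissonKer ε x := by
  unfold poissonKer cubicDecay
  rw [← mul_div_assoc, ← mul_div_assoc, div_le_div_iff₀ (by positivity) (by positivity),
    ← sq_abs x]
  have h_cube : (|x| + ε) * (|x| ^ 2 + ε ^ 2) ≤ 2 * (ε ^ 3 + |x| ^ 3) := by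
    nlinarith [mul_nonneg (add_nonneg (abs_nonneg x) hε.le) (sq_nonneg (|x| - ε))]
  nlinarith

lemma cubicDecay_le_poissonKer_sqrt {c : ℝ} (hε : 0 < ε) (hc : 1 ≤ c) (hx : √ε ≤ c * |x|) :
    cubicDecay ε x ≤ 2 * c ^ 3 * poissonKer √ε x := by
  have hs : 0 < √ε := Real.sqrt_pos.2 hε
  have hx0 : 0 < |x| := pos_of_mul_pos_right (hs.trans_le hx) (by linarith)
  have h_cube : √ε * (x ^ 2 + √ε ^ 2) ≤ 2 * c ^ 3 * |x| ^ 3 := by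
    have h_le : |x| ≤ c * |x| := le_mul_of_one_le_left hx0.le hc
    calc √ε * (x ^ 2 + √ε ^ 2) ≤ (c * |x|) * ((c * |x|) ^ 2 + (c * |x|) ^ 2) := by
          rw [← sq_abs x]
          gcongr
      _ = 2 * c ^ 3 * |x| ^ 3 := by ring
  unfold poissonKer cubicDecay
  rw [← mul_div_assoc, div_le_div_iff₀ (by positivity) (by positivity)]
  calc ε * (x ^ 2 + √ε ^ 2) = √ε * (√ε * (x ^ 2 + √ε ^ 2)) := by
        nth_rewrite 1 [← Real.mul_self_sqrt hε.le]
        ring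
    _ ≤ √ε * (2 * c ^ 3 * |x| ^ 3) := by gcongr
    _ ≤ 2 * c ^ 3 * √ε * (ε ^ 3 + |x| ^ 3) := by
        have : 0 ≤ 2 * c ^ 3 * √ε * ε ^ 3 := by positivity
        linarith

end Kernels

section PrincipalValue

variable {F : ℝ → ℝ} {c r : ℝ}

lemma setOf_lt_abs_sub (c r : ℝ) : {x : ℝ | r < |c - x|} = Iio (c - r) ∪ Ioi (c + r) := by
  ext x
  rw [mem_ofPred_eq, lt_abs, mem_union, mem_Iio, mem_Ioi, lt_sub_comm, neg_sub,
    lt_sub_iff_add_lt', lt_sub_iff_add_lt']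

lemma setIntegral_lt_abs_sub (hr : 0 ≤ r) (hF : IntegrableOn F {x | r < |c - x|}) :
    ∫ x in {x | r < |c - x|}, F x = ∫ t in Ioi r, (F (c + t) + F (c - t)) := by
  rw [setOf_lt_abs_sub, integrableOn_union] at hF
  have h_add : MeasurePreserving (c + ·) volume volume := measurePreserving_add_left volume c
  have h_sub : MeasurePreserving (c - ·) volume volume :=
    Measure.measurePreserving_sub_left volume c
  have e_add : MeasurableEmbedding (c + · : ℝ → ℝ) := measurableEmbedding_addLeft c
  have e_sub : MeasurableEmbedding (c - · : ℝ → ℝ) := measurableEmbedding_subLeft c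
  have pre_add : (c + ·) ⁻¹' Ioi (c + r) = Ioi r := by simp
  have pre_sub : (c - ·) ⁻¹' Iio (c - r) = Ioi r := by simp
  have h_disj : Disjoint (Iio (c - r)) (Ioi (c + r)) :=
    Iio_disjoint_Ioi_of_le (by linarith)
  have int_add : IntegrableOn (fun t ↦ F (c + t)) (Ioi r) := by
    rw [← pre_add]
    exact (h_add.integrableOn_comp_preimage e_add).2 hF.2
  have int_sub : IntegrableOn (fun t ↦ F (c - t)) (Ioi r) := by
    rw [← pre_sub]
    exact (h_sub.integrableOn_comp_preimage e_sub).2 hF.1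
  rw [setOf_lt_abs_sub, setIntegral_union h_disj measurableSet_Ioi hF.1 hF.2,
    integral_add int_add int_sub, ← h_add.setIntegral_preimage_emb e_add F (Ioi _),
    ← h_sub.setIntegral_preimage_emb e_sub F (Iio _), pre_add, pre_sub, add_comm]

lemma pvI_eq_setIntegral_Ioi (hF : ∀ r, 0 < r → IntegrableOn F {x | r < |c - x|})
    (hS : IntegrableOn (fun t ↦ F (c + t) + F (c - t)) (Ioi 0)) :
    pvI F c = ∫ t in Ioi 0, (F (c + t) + F (c - t)) := by
  have h_cover : AECover (volume.restrict (Ioi (0 : ℝ))) (nhdsWithin 0 (Ioi 0))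
      (fun r : ℝ ↦ Ioi r) := aecover_Ioi_of_Ioi (tendsto_id.mono_left nhdsWithin_le_nhds)
  refine Tendsto.limUnder_eq
    ((h_cover.integral_tendsto_of_countably_generated hS).congr' ?_)
  filter_upwards [self_mem_nhdsWithin] with r hr
  rw [setIntegral_lt_abs_sub (le_of_lt hr) (hF r hr), Measure.restrict_restrict measurableSet_Ioi,
    inter_eq_left.2 (Ioi_subset_Ioi (le_of_lt hr))]

end PrincipalValue

section Cutoff

/-- The properties of the cutoff `ψ` that the estimate uses: those of `IsCutoff`, with smoothness
weakened to Lipschitz continuity with constant `K`. -/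
structure IsLipschitzCutoff (K : NNReal) (ψ : ℝ → ℝ) : Prop where
  lipschitzWith : LipschitzWith K ψ
  even : ∀ x, ψ (-x) = ψ x
  mem_Icc : ∀ x, ψ x ∈ Icc (0 : ℝ) 1
  eq_zero : ∀ x, 1 < |x| → ψ x = 0
  eq_one : ∀ x, |x| ≤ 1 / 2 → ψ x = 1

lemma IsCutoff.exists_isLipschitzCutoff {ψ : ℝ → ℝ} (hψ : IsCutoff ψ) :
    ∃ K, IsLipschitzCutoff K ψ := by
  obtain ⟨h_smooth, h_even, h_mem, h_zero, h_one⟩ := hψ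
  have h_supp : HasCompactSupport ψ := .intro (isCompact_Icc (a := -1) (b := 1)) fun x hx ↦
    h_zero x (not_le.1 fun h ↦ hx (abs_le.1 h))
  obtain ⟨K, hK⟩ := h_smooth.lipschitzWith_of_hasCompactSupport h_supp (by simp)
  exact ⟨K, hK, h_even, h_mem, h_zero, h_one⟩

namespace IsLipschitzCutoff

variable {K : NNReal} {ψ : ℝ → ℝ} {r x : ℝ}

lemma abs_scut_le_one (hψ : IsLipschitzCutoff K ψ) (r x : ℝ) : |scut ψ r x| ≤ 1 :=
  abs_le.2 ⟨by linarith [(hψ.mem_Icc (x / r)).1, scut.eq_1 ψ r x], (hψ.mem_Icc _).2⟩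

lemma scut_neg (hψ : IsLipschitzCutoff K ψ) (r x : ℝ) : scut ψ r (-x) = scut ψ r x := by
  rw [scut, neg_div, hψ.even, scut]

lemma scut_eq_zero (hψ : IsLipschitzCutoff K ψ) (hr : 0 < r) (hx : r < |x|) :
    scut ψ r x = 0 :=
  hψ.eq_zero _ (by rwa [abs_div, abs_of_pos hr, one_lt_div hr])

lemma scut_eq_one (hψ : IsLipschitzCutoff K ψ) (hr : 0 < r) (hx : |x| ≤ r / 2) :
    scut ψ r x = 1 :=
  hψ.eq_one _ (by rw [abs_div, abs_of_pos hr, div_le_iff₀ hr]; linarith)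

lemma abs_scut_sub_le (hψ : IsLipschitzCutoff K ψ) (hr : 0 < r) (x y : ℝ) :
    |scut ψ r x - scut ψ r y| ≤ K * |x - y| / r := by
  have h := hψ.lipschitzWith.dist_le_mul (x / r) (y / r)
  rwa [Real.dist_eq, Real.dist_eq, ← sub_div, abs_div, abs_of_pos hr, ← mul_div_assoc] at h

lemma continuous_scut (hψ : IsLipschitzCutoff K ψ) (r : ℝ) : Continuous (scut ψ r) :=
  hψ.lipschitzWith.continuous.comp (continuous_id.div_const r)

end IsLipschitzCutoff

end Cutoff

section TestFunction

/-- The size and derivative bounds of the class `C₂`, imposed on the whole line. -/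
structure IsTestFun (ε : ℝ) (φ : ℝ → ℝ) : Prop where
  differentiable : Differentiable ℝ φ
  abs_apply_le : ∀ x, |φ x| ≤ poissonKer ε x
  abs_deriv_le : ∀ x, |deriv φ x| ≤ cubicDecay ε x

lemma InC2.isTestFun {δ ε : ℝ} {φ : ℝ → ℝ} (hε : 0 ≤ ε) (hφ : InC2 δ ε φ) : IsTestFun ε φ := by
  obtain ⟨h_diff, -, h_supp, h_bound⟩ := hφ
  refine ⟨h_diff.differentiable one_ne_zero, fun x ↦ ?_, fun x ↦ ?_⟩ <;>
    by_cases hx : x ∈ tsupport φ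
  · simpa only [poissonKer, sq_abs, add_comm] using (h_bound x (h_supp hx)).1
  · simpa only [image_eq_zero_of_notMem_tsupport hx, abs_zero] using poissonKer_nonneg hε x
  · exact (h_bound x (h_supp hx)).2
  · rw [image_eq_zero_of_notMem_tsupport fun h ↦ hx (tsupport_deriv_subset (f := φ) h), abs_zero]
    exact cubicDecay_nonneg hε x

end TestFunction

section Flatness

variable {A : ℝ} {f : ℝ → ℝ} {s : Set ℝ}

/-- `f` vanishes to second order at the origin, in the quantitative form in which a bound `A` for
the second derivative enters the estimates. -/
structure FlatOn (A : ℝ) (s : Set ℝ) (f : ℝ → ℝ) : Prop where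
  map_zero : f 0 = 0
  abs_sub_le : ∀ x ∈ s, ∀ y ∈ s, |f x - f y| ≤ A * (|x| + |y|) * |x - y|

lemma FlatOn.mono {t : Set ℝ} (hf : FlatOn A t f) (hst : s ⊆ t) : FlatOn A s f :=
  ⟨hf.map_zero, fun x hx y hy ↦ hf.abs_sub_le x (hst hx) y (hst hy)⟩

lemma FlatOn.abs_le (hf : FlatOn A s f) (h0 : 0 ∈ s) {x : ℝ} (hx : x ∈ s) :
    |f x| ≤ A * |x| ^ 2 := by
  have h := hf.abs_sub_le x hx 0 h0
  rw [hf.map_zero, abs_zero, sub_zero, sub_zero, add_zero] at h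
  linarith

lemma flatOn_of_abs_iteratedDerivWithin_le (hs : IsOpen s) (hs_conv : Convex ℝ s) (h0 : 0 ∈ s)
    (hf : ContDiffOn ℝ 2 f s) (hf0 : f 0 = 0) (hf1 : derivWithin f s 0 = 0)
    (hf2 : ∀ x ∈ s, |iteratedDerivWithin 2 f s x| ≤ A) : FlatOn A s f := by
  have hA : 0 ≤ A := (abs_nonneg _).trans (hf2 0 h0)
  have h_deriv : ∀ z ∈ s, ‖derivWithin f s z‖ ≤ A * |z| := by
    intro z hz
    have h_diff : DifferentiableOn ℝ (derivWithin f s) s :=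
      (hf.derivWithin hs.uniqueDiffOn (m := 1) (by norm_num)).differentiableOn one_ne_zero
    simpa [hf1] using hs_conv.norm_image_sub_le_of_norm_derivWithin_le h_diff
      (fun w hw ↦ by simpa [iteratedDerivWithin_succ, iteratedDerivWithin_one] using hf2 w hw)
      h0 hz
  refine ⟨hf0, fun x hx y hy ↦ ?_⟩
  have h_sub : uIcc y x ⊆ s := hs_conv.ordConnected.uIcc_subset hy hx
  have h_bound : ∀ z ∈ uIcc y x, ‖deriv f z‖ ≤ A * (|x| + |y|) := by
    intro z hz
    rw [← derivWithin_of_isOpen hs (h_sub hz)]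
    refine (h_deriv z (h_sub hz)).trans ?_
    gcongr
    rcases mem_uIcc.1 hz with ⟨h_left, h_right⟩ | ⟨h_left, h_right⟩ <;>
      exact abs_le.2 ⟨by linarith [neg_abs_le x, neg_abs_le y, abs_nonneg x, abs_nonneg y],
        by linarith [le_abs_self x, le_abs_self y, abs_nonneg x, abs_nonneg y]⟩
  exact (convex_uIcc y x).norm_image_sub_le_of_norm_deriv_le
    (fun z hz ↦ (hf.differentiableOn two_ne_zero).differentiableAt (hs.mem_nhds (h_sub hz)))
    h_bound left_mem_uIcc right_mem_uIcc

end Flatness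

section TamePair

variable {A ε r : ℝ} {f g : ℝ → ℝ}

lemma abs_projIcc_neg_le (hr : 0 ≤ r) (x : ℝ) :
    |(projIcc (-r) r (neg_le_self hr) x : ℝ)| ≤ min r |x| := by
  have h_dist := (LipschitzWith.projIcc (neg_le_self hr)).dist_le_mul x 0
  rw [Subtype.dist_eq, projIcc_of_mem _ (show (0 : ℝ) ∈ Icc (-r) r from ⟨neg_nonpos.2 hr, hr⟩),
    Real.dist_eq, Real.dist_eq, sub_zero, sub_zero, NNReal.coe_one, one_mul] at h_dist
  exact le_min (abs_le.2 (projIcc (-r) r _ x).2) h_dist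

lemma abs_projIcc_sub_le (hr : 0 ≤ r) (x y : ℝ) :
    |(projIcc (-r) r (neg_le_self hr) x - projIcc (-r) r (neg_le_self hr) y : ℝ)| ≤ |x - y| := by
  simpa [Subtype.dist_eq, Real.dist_eq] using
    (LipschitzWith.projIcc (neg_le_self hr)).dist_le_mul x y

/-- Global bounds at scale `√ε` for the boundary functions `f`, `g`; they hold once a function that
is flat on `[-2√ε, 2√ε]` is extended from there by constants. -/
structure IsTame (A ε : ℝ) (f : ℝ → ℝ) : Prop where
  flat : FlatOn A univ f
  abs_sub_le_sqrt : ∀ x y, |f x - f y| ≤ 4 * A * √ε * |x - y|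
  le : ∀ x, f x ≤ 4 * A * ε

lemma IsTame.abs_sub_le (hf : IsTame A ε f) (x y : ℝ) :
    |f x - f y| ≤ A * (|x| + |y|) * |x - y| :=
  hf.flat.abs_sub_le x trivial y trivial

lemma IsTame.abs_le (hf : IsTame A ε f) (x : ℝ) : |f x| ≤ A * |x| ^ 2 :=
  hf.flat.abs_le trivial trivial

lemma IsTame.continuous (hf : IsTame A ε f) : Continuous f :=
  (LipschitzWith.of_dist_le' hf.abs_sub_le_sqrt).continuous

lemma FlatOn.isTame_comp_projIcc (hA : 0 ≤ A) (hε : 0 ≤ ε)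
    (hf : FlatOn A (Icc (-(2 * √ε)) (2 * √ε)) f) :
    IsTame A ε fun x ↦ f (projIcc (-(2 * √ε)) (2 * √ε) (neg_le_self (by positivity)) x) := by
  have hr : 0 ≤ 2 * √ε := by positivity
  have h_abs := abs_projIcc_neg_le hr
  have h_sub := abs_projIcc_sub_le hr
  have h_zero : (0 : ℝ) ∈ Icc (-(2 * √ε)) (2 * √ε) := ⟨neg_nonpos.2 hr, hr⟩
  refine ⟨⟨?_, fun x _ y _ ↦ ?_⟩, fun x y ↦ ?_, fun x ↦ ?_⟩
  · simpa only [projIcc_of_mem _ h_zero] using hf.map_zero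
  · refine (hf.abs_sub_le _ (Subtype.coe_prop _) _ (Subtype.coe_prop _)).trans ?_
    gcongr A * (?_ + ?_) * ?_
    exacts [(h_abs x).trans (min_le_right _ _), (h_abs y).trans (min_le_right _ _), h_sub x y]
  · refine (hf.abs_sub_le _ (Subtype.coe_prop _) _ (Subtype.coe_prop _)).trans ?_
    calc _ ≤ A * (2 * √ε + 2 * √ε) * |x - y| := by
          gcongr A * (?_ + ?_) * ?_
          exacts [(h_abs x).trans (min_le_left _ _), (h_abs y).trans (min_le_left _ _), h_sub x y]
      _ = 4 * A * √ε * |x - y| := by ring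
  · calc _ ≤ _ := (le_abs_self _).trans (hf.abs_le h_zero (Subtype.coe_prop _))
      _ ≤ A * (2 * √ε) ^ 2 := by
          gcongr
          exact (h_abs x).trans (min_le_left _ _)
      _ = 4 * A * ε := by rw [mul_pow, Real.sq_sqrt hε]; ring

/-- The vertical distance `2ε + f(a) + g(b)` between the two boundary curves, measured at the
abscissae `a` and `b`; it equals `Xt ε f g a` for `b = a`. -/
def gap (ε : ℝ) (f g : ℝ → ℝ) (a b : ℝ) : ℝ := 2 * ε + f a + g b

/-- Two tame functions whose gap is at least `ε`. -/
structure TamePair (A ε : ℝ) (f g : ℝ → ℝ) : Prop where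
  left : IsTame A ε f
  right : IsTame A ε g
  le_gap : ∀ a b, ε ≤ gap ε f g a b

namespace TamePair

lemma gap_pos (hfg : TamePair A ε f g) (hε : 0 < ε) (a b : ℝ) : 0 < gap ε f g a b :=
  hε.trans_le (hfg.le_gap a b)

lemma gap_le (hfg : TamePair A ε f g) (hA : 1 ≤ A) (hε : 0 ≤ ε) (a b : ℝ) :
    gap ε f g a b ≤ 10 * A * ε := by
  unfold gap
  nlinarith [hfg.left.le a, hfg.right.le b]

lemma abs_gap_zero_sub_gap_le (hfg : TamePair A ε f g) (a b : ℝ) :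
    |gap ε f g 0 b - gap ε f g a b| ≤ A * |a| ^ 2 := by
  rw [show gap ε f g 0 b - gap ε f g a b = -f a by
    simp only [gap, hfg.left.flat.map_zero]; ring, abs_neg]
  exact hfg.left.abs_le a

lemma abs_gap_zero_zero_sub_gap_self_le (hfg : TamePair A ε f g) (a : ℝ) :
    |gap ε f g 0 0 - gap ε f g a a| ≤ 2 * A * |a| ^ 2 := by
  rw [show gap ε f g 0 0 - gap ε f g a a = -(f a + g a) by
    simp only [gap, hfg.left.flat.map_zero, hfg.right.flat.map_zero]; ring, abs_neg]
  linarith [abs_add_le (f a) (g a), hfg.left.abs_le a, hfg.right.abs_le a]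

lemma continuous_gap (hfg : TamePair A ε f g) :
    Continuous fun p : ℝ × ℝ ↦ gap ε f g p.1 p.2 := by
  have := hfg.left.continuous
  have := hfg.right.continuous
  unfold gap
  fun_prop

lemma continuous_Xt (hfg : TamePair A ε f g) : Continuous (Xt ε f g) :=
  hfg.continuous_gap.comp (continuous_id.prodMk continuous_id)

lemma abs_Xt_sub_le (hfg : TamePair A ε f g) (x y : ℝ) :
    |Xt ε f g x - Xt ε f g y| ≤ 8 * A * √ε * |x - y| := by
  calc |Xt ε f g x - Xt ε f g y| = |(f x - f y) + (g x - g y)| := by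
        unfold Xt
        congr 1
        ring
    _ ≤ _ := (abs_add_le _ _).trans
        (add_le_add (hfg.left.abs_sub_le_sqrt x y) (hfg.right.abs_sub_le_sqrt x y))
    _ = 8 * A * √ε * |x - y| := by ring

end TamePair

lemma FlatOn.tamePair_comp_projIcc (hA : 0 ≤ A) (hε : 0 ≤ ε)
    (hf : FlatOn A (Icc (-(2 * √ε)) (2 * √ε)) f) (hg : FlatOn A (Icc (-(2 * √ε)) (2 * √ε)) g)
    (hfg : ∀ x ∈ Icc (-(2 * √ε)) (2 * √ε), ∀ y ∈ Icc (-(2 * √ε)) (2 * √ε), -ε ≤ f x + g y) :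
    TamePair A ε (fun x ↦ f (projIcc (-(2 * √ε)) (2 * √ε) (neg_le_self (by positivity)) x))
      (fun x ↦ g (projIcc (-(2 * √ε)) (2 * √ε) (neg_le_self (by positivity)) x)) := by
  refine ⟨hf.isTame_comp_projIcc hA hε, hg.isTame_comp_projIcc hA hε, fun a b ↦ ?_⟩
  unfold gap
  linarith [hfg _ (projIcc (-(2 * √ε)) (2 * √ε) (neg_le_self (by positivity)) a).2
    _ (projIcc (-(2 * √ε)) (2 * √ε) (neg_le_self (by positivity)) b).2]

end TamePair

section Localization

variable {K : NNReal} {ψ : ℝ → ℝ} {ε : ℝ} {f f' g g' h h' : ℝ → ℝ}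

lemma Xt_comm (ε : ℝ) (f g : ℝ → ℝ) : Xt ε g f = Xt ε f g :=
  funext fun _ ↦ add_right_comm _ _ _

lemma Mop_comm (ψ : ℝ → ℝ) (ε : ℝ) (f g h : ℝ → ℝ) : Mop ψ ε g f h = Mop ψ ε f g h := by
  ext α
  simp only [Mop, Mker, Xt_comm]

lemma Hstar_comm (ψ : ℝ → ℝ) (ε : ℝ) (f g φ : ℝ → ℝ) : Hstar ψ ε g f φ = Hstar ψ ε f g φ := by
  ext β
  simp only [Hstar, Hker, Xt_comm]

lemma Xt_eq_or_scut_eq_zero (hψ : IsLipschitzCutoff K ψ) (hε : 0 < ε)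
    (hf : EqOn f f' (Ioo (-(2 * √ε)) (2 * √ε))) (hg : EqOn g g' (Ioo (-(2 * √ε)) (2 * √ε)))
    (α : ℝ) : Xt ε f g α = Xt ε f' g' α ∨ scut ψ (√ε / 2 ^ 6) α = 0 := by
  have hs : 0 < √ε := Real.sqrt_pos.2 hε
  by_cases hα : √ε / 2 ^ 6 < |α|
  · exact .inr (hψ.scut_eq_zero (by positivity) hα)
  · have h_mem : α ∈ Ioo (-(2 * √ε)) (2 * √ε) := abs_lt.1 (by linarith)
    exact .inl (by rw [Xt, Xt, hf h_mem, hg h_mem])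

lemma Hstar_congr (hψ : IsLipschitzCutoff K ψ) (hε : 0 < ε)
    (hf : EqOn f f' (Ioo (-(2 * √ε)) (2 * √ε))) (hg : EqOn g g' (Ioo (-(2 * √ε)) (2 * √ε)))
    (φ : ℝ → ℝ) : Hstar ψ ε f g φ = Hstar ψ ε f' g' φ := by
  have h_ker : Hker ψ ε f g = Hker ψ ε f' g' := by
    ext α β
    rcases Xt_eq_or_scut_eq_zero hψ hε hf hg α with h | h <;> simp [Hker, h]
  ext β
  rw [Hstar, Hstar, h_ker]

lemma Mop_congr (hψ : IsLipschitzCutoff K ψ) (hε : 0 < ε)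
    (hf : EqOn f f' (Ioo (-(2 * √ε)) (2 * √ε))) (hg : EqOn g g' (Ioo (-(2 * √ε)) (2 * √ε)))
    (hh : EqOn h h' (Ioo (-(2 * √ε)) (2 * √ε))) : Mop ψ ε f g h = Mop ψ ε f' g' h' := by
  have hs : 0 < √ε := Real.sqrt_pos.2 hε
  ext α
  unfold Mop
  congr 2 with β
  by_cases hα : √ε / 2 ^ 6 < |α|
  · simp [Mker, hψ.scut_eq_zero (by positivity) hα]
  by_cases hβ : √ε / 2 ^ 6 < |α - β|
  · simp [Mker, hψ.scut_eq_zero (by positivity) hβ]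
  have h_mem : β ∈ Ioo (-(2 * √ε)) (2 * √ε) := abs_lt.1 (by
    linarith [abs_sub_abs_le_abs_sub β α, abs_sub_comm α β])
  rcases Xt_eq_or_scut_eq_zero hψ hε hf hg α with h | h <;> simp [Mker, h, hh h_mem]

lemma T3_congr (hψ : IsLipschitzCutoff K ψ) (hε : 0 < ε)
    (hf : EqOn f f' (Ioo (-(2 * √ε)) (2 * √ε))) (hg : EqOn g g' (Ioo (-(2 * √ε)) (2 * √ε)))
    (hh : EqOn h h' (Ioo (-(2 * √ε)) (2 * √ε))) {α : ℝ} (hα : |α| < √ε) :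
    T3 ψ ε f g h α = T3 ψ ε f' g' h' α := by
  have hs : 0 < √ε := Real.sqrt_pos.2 hε
  unfold T3
  congr 2 with β
  by_cases hβ : √ε < |α - β|
  · simp [hψ.scut_eq_zero hs hβ]
  have h_mem : β ∈ Ioo (-(2 * √ε)) (2 * √ε) := abs_lt.1 (by
    linarith [abs_sub_abs_le_abs_sub β α, abs_sub_comm α β])
  rw [hf (abs_lt.1 (by linarith) : α ∈ _), hg h_mem, hh h_mem]

lemma Hker_eq_zero (hψ : IsLipschitzCutoff K ψ) (hε : 0 < ε) {α β : ℝ} (hβ : √ε / 2 ^ 5 < |β|) :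
    Hker ψ ε f g α β = 0 := by
  by_cases hα : √ε / 2 ^ 6 < |α|
  · simp [Hker, hψ.scut_eq_zero (by positivity) hα]
  · have hαβ : √ε / 2 ^ 6 < |α - β| := by
      linarith [abs_sub_abs_le_abs_sub β α, abs_sub_comm α β]
    simp [Hker, hψ.scut_eq_zero (by positivity) hαβ]

lemma Hstar_eq_zero (hψ : IsLipschitzCutoff K ψ) (hε : 0 < ε) (φ : ℝ → ℝ) {β : ℝ}
    (hβ : √ε / 2 ^ 5 < |β|) : Hstar ψ ε f g φ β = 0 := by
  have h_pv : pvI (fun _ ↦ 0) β = 0 := by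
    unfold pvI
    simp only [integral_zero]
    exact tendsto_const_nhds.limUnder_eq
  simp only [Hstar, Hker_eq_zero hψ hε hβ, zero_mul, h_pv, mul_zero]

end Localization

section AdjointOfH

/-- The bounded part of the kernel of `H*` applied to `φ`: with `r = α - β`, the kernel
`Hker ψ ε f g α β * φ α` is `r⁻¹ ψ(r) HstarAmp ψ ε f g φ α r`, with `ψ` rescaled to `√ε / 2⁶`. -/
def HstarAmp (ψ : ℝ → ℝ) (ε : ℝ) (f g φ : ℝ → ℝ) (a r : ℝ) : ℝ :=
  Xt ε f g a * poissonKer (Xt ε f g a) r * scut ψ (√ε / 2 ^ 6) a * φ a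

/-- The symmetrisation `r ↦ k(β + r) + k(β - r)` of the kernel `k` of `H*` about its singularity,
which turns the principal value into an absolutely convergent integral. -/
def HstarSym (ψ : ℝ → ℝ) (ε : ℝ) (f g φ : ℝ → ℝ) (β r : ℝ) : ℝ :=
  r⁻¹ * scut ψ (√ε / 2 ^ 6) r * (HstarAmp ψ ε f g φ (β + r) r - HstarAmp ψ ε f g φ (β - r) r)

variable {A ε β r : ℝ} {K : NNReal} {ψ f g φ : ℝ → ℝ}

lemma Hker_mul_eq (ψ : ℝ → ℝ) (ε : ℝ) (f g φ : ℝ → ℝ) (α β : ℝ) :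
    Hker ψ ε f g α β * φ α =
      (α - β)⁻¹ * scut ψ (√ε / 2 ^ 6) (α - β) * HstarAmp ψ ε f g φ α (α - β) := by
  unfold Hker HstarAmp poissonKer
  ring

lemma Hker_add_Hker_eq_HstarSym (hψ : IsLipschitzCutoff K ψ) (ε : ℝ) (f g φ : ℝ → ℝ) (β r : ℝ) :
    Hker ψ ε f g (β + r) β * φ (β + r) + Hker ψ ε f g (β - r) β * φ (β - r) =
      HstarSym ψ ε f g φ β r := by
  rw [Hker_mul_eq, Hker_mul_eq, add_sub_cancel_left, sub_sub_cancel_left, hψ.scut_neg, inv_neg,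
    HstarSym]
  simp only [HstarAmp, poissonKer_neg]
  ring

lemma poissonKer_le_mul_cubicDecay (hε : 0 < ε) (hβ : ε ≤ |β|) (hr : |β| ≤ 2 * r) :
    poissonKer ε r ≤ 16 * r * cubicDecay ε β := by
  have hr0 : 0 < r := by linarith
  have h_cube : |β| ^ 3 ≤ 8 * r ^ 3 :=
    (pow_le_pow_left₀ (abs_nonneg β) hr 3).trans_eq (by ring)
  have h_eps : ε ^ 3 ≤ |β| ^ 3 := pow_le_pow_left₀ hε.le hβ 3
  unfold poissonKer cubicDecay
  rw [← mul_div_assoc, div_le_div_iff₀ (by positivity) (by positivity)]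
  calc ε * (ε ^ 3 + |β| ^ 3) ≤ ε * (16 * r ^ 3) := by
        gcongr
        linarith
    _ ≤ 16 * r * ε * (r ^ 2 + ε ^ 2) := by
        have : 0 ≤ 16 * r * ε * ε ^ 2 := by positivity
        linarith

lemma TamePair.abs_Xt_mul_poissonKer_le (hfg : TamePair A ε f g) (hA : 1 ≤ A) (hε : 0 < ε)
    (a r : ℝ) :
    |Xt ε f g a * poissonKer (Xt ε f g a) r| ≤ 100 * A ^ 2 * ε * poissonKer ε r := by
  have hX : 0 < Xt ε f g a := hfg.gap_pos hε a a
  have hX_le : Xt ε f g a ≤ 10 * A * ε := hfg.gap_le hA hε.le a a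
  have hP := poissonKer_nonneg hX.le r
  calc |Xt ε f g a * poissonKer (Xt ε f g a) r| = Xt ε f g a * poissonKer (Xt ε f g a) r :=
        abs_of_nonneg (mul_nonneg hX.le hP)
    _ ≤ (10 * A * ε) * (10 * A * poissonKer ε r) := by
        gcongr
        exact poissonKer_le_mul hε (hfg.le_gap a a) hX_le r
    _ = 100 * A ^ 2 * ε * poissonKer ε r := by ring

lemma TamePair.abs_Xt_mul_poissonKer_sub_le (hfg : TamePair A ε f g) (hA : 1 ≤ A) (hε : 0 < ε)
    (a b r : ℝ) :
    |Xt ε f g a * poissonKer (Xt ε f g a) r - Xt ε f g b * poissonKer (Xt ε f g b) r| ≤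
      160 * A ^ 2 * √ε * |a - b| * poissonKer ε r := by
  have hP : 0 ≤ poissonKer ε r := poissonKer_nonneg hε.le r
  calc _ ≤ 2 * (10 * A) * |Xt ε f g a - Xt ε f g b| * poissonKer ε r :=
        abs_mul_poissonKer_sub_le hε (hfg.le_gap a a) (hfg.gap_le hA hε.le a a)
          (hfg.le_gap b b) (hfg.gap_le hA hε.le b b) r
    _ ≤ 2 * (10 * A) * (8 * A * √ε * |a - b|) * poissonKer ε r := by
        gcongr
        exact hfg.abs_Xt_sub_le a b
    _ = 160 * A ^ 2 * √ε * |a - b| * poissonKer ε r := by ring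

lemma abs_HstarAmp_le (hψ : IsLipschitzCutoff K ψ) (hA : 1 ≤ A) (hε : 0 < ε)
    (hfg : TamePair A ε f g) (hφ : IsTestFun ε φ) (a r : ℝ) :
    |HstarAmp ψ ε f g φ a r| ≤ 100 * A ^ 2 * ε * poissonKer ε r * poissonKer ε a := by
  have hP := poissonKer_nonneg hε.le r
  rw [HstarAmp, abs_mul, abs_mul, ← mul_one (100 * A ^ 2 * ε * poissonKer ε r)]
  gcongr
  exacts [hfg.abs_Xt_mul_poissonKer_le hA hε a r, hψ.abs_scut_le_one _ _, hφ.abs_apply_le a]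

lemma IsTestFun.abs_symm_sub_le (hφ : IsTestFun ε φ) (hε : 0 < ε) (hr : 0 ≤ r)
    (hβr : |β| ≤ ε ∨ 2 * r ≤ |β|) :
    |φ (β + r) - φ (β - r)| ≤ 16 * r * cubicDecay ε β := by
  have h_deriv : ∀ x ∈ Icc (β - r) (β + r), ‖deriv φ x‖ ≤ 8 * cubicDecay ε β := by
    intro x hx
    refine (hφ.abs_deriv_le x).trans (cubicDecay_le_eight_mul hε (le_max_iff.2 ?_))
    refine hβr.imp_right fun h ↦ ?_
    have h_dist : |β - x| ≤ r := abs_le.2 ⟨by linarith [hx.2], by linarith [hx.1]⟩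
    linarith [abs_sub_abs_le_abs_sub β x]
  have h_mvt := (convex_Icc (β - r) (β + r)).norm_image_sub_le_of_norm_deriv_le
    (fun x _ ↦ hφ.differentiable x) h_deriv (left_mem_Icc.2 (by linarith))
    (right_mem_Icc.2 (by linarith))
  rw [Real.norm_eq_abs, Real.norm_eq_abs, show β + r - (β - r) = 2 * r by ring,
    abs_of_nonneg (by linarith : 0 ≤ 2 * r)] at h_mvt
  linarith

lemma IsTestFun.abs_apply_add_le (hφ : IsTestFun ε φ) (hε : 0 < ε) (hε1 : ε ≤ 1)
    (hβ : |β| ≤ √ε) (hβr : |β| ≤ ε ∨ 2 * |r| ≤ |β|) :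
    |φ (β + r)| ≤ 4 * √ε * cubicDecay ε β := by
  have h_max : |β| ≤ max ε (2 * |β + r|) := by
    refine le_max_iff.2 (hβr.imp_right fun h ↦ ?_)
    have := abs_sub_abs_le_abs_sub β (-r)
    rw [abs_neg, sub_neg_eq_add] at this
    linarith
  calc |φ (β + r)| ≤ poissonKer ε (β + r) := hφ.abs_apply_le _
    _ ≤ 4 * poissonKer ε β := poissonKer_le_four_mul hε h_max
    _ ≤ 4 * (√ε * cubicDecay ε β) := by
        gcongr
        exact poissonKer_le_sqrt_mul_cubicDecay hε hε1 hβ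
    _ = 4 * √ε * cubicDecay ε β := by ring

lemma abs_mul_mul_sub_mul_mul_le (a b c a' b' c' : ℝ) :
    |a * b * c - a' * b' * c'| ≤
      |a - a'| * |b| * |c| + |a'| * |b - b'| * |c| + |a'| * |b'| * |c - c'| := by
  have h_eq : a * b * c - a' * b' * c' =
      (a - a') * b * c + a' * (b - b') * c + a' * b' * (c - c') := by ring
  rw [h_eq]
  exact (abs_add_three _ _ _).trans_eq (by simp only [abs_mul])

lemma abs_HstarAmp_sub_le_of_near (hψ : IsLipschitzCutoff K ψ) (hA : 1 ≤ A) (hε : 0 < ε)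
    (hε1 : ε ≤ 1) (hfg : TamePair A ε f g) (hφ : IsTestFun ε φ) (hβ : |β| ≤ √ε) (hr : 0 ≤ r)
    (hβr : |β| ≤ ε ∨ 2 * r ≤ |β|) :
    |HstarAmp ψ ε f g φ (β + r) r - HstarAmp ψ ε f g φ (β - r) r| ≤
      60000 * A ^ 2 * (1 + K) * r * cubicDecay ε β * ε * poissonKer ε r := by
  have hP : 0 ≤ poissonKer ε r := poissonKer_nonneg hε.le r
  have hD : 0 ≤ cubicDecay ε β := cubicDecay_nonneg hε.le β
  have h_two : |β + r - (β - r)| = 2 * r := by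
    rw [show β + r - (β - r) = 2 * r by ring, abs_of_nonneg (by linarith)]
  have X_sub := hfg.abs_Xt_mul_poissonKer_sub_le hA hε (β + r) (β - r) r
  have X_le := hfg.abs_Xt_mul_poissonKer_le hA hε (β - r) r
  have cut_sub := hψ.abs_scut_sub_le (by positivity : 0 < √ε / 2 ^ 6) (β + r) (β - r)
  rw [h_two] at X_sub cut_sub
  have φ_le : |φ (β + r)| ≤ 4 * √ε * cubicDecay ε β :=
    hφ.abs_apply_add_le hε hε1 hβ (by rwa [abs_of_nonneg hr])
  have φ_sub := hφ.abs_symm_sub_le hε hr hβr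
  calc |HstarAmp ψ ε f g φ (β + r) r - HstarAmp ψ ε f g φ (β - r) r|
      ≤ _ := abs_mul_mul_sub_mul_mul_le _ _ _ _ _ _
    _ ≤ 160 * A ^ 2 * √ε * (2 * r) * poissonKer ε r * 1 * (4 * √ε * cubicDecay ε β) +
          100 * A ^ 2 * ε * poissonKer ε r * (K * (2 * r) / (√ε / 2 ^ 6)) *
            (4 * √ε * cubicDecay ε β) +
          100 * A ^ 2 * ε * poissonKer ε r * 1 * (16 * r * cubicDecay ε β) := by
        gcongr
        exacts [hψ.abs_scut_le_one _ _, hψ.abs_scut_le_one _ _]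
    _ = (2880 + 51200 * K) * (A ^ 2 * r * cubicDecay ε β * ε * poissonKer ε r) := by
        field_simp
        rw [Real.sq_sqrt hε.le]
        ring
    _ ≤ (60000 * (1 + K)) * (A ^ 2 * r * cubicDecay ε β * ε * poissonKer ε r) := by
        gcongr
        linarith [K.coe_nonneg]
    _ = _ := by ring

lemma abs_HstarAmp_le_of_far (hψ : IsLipschitzCutoff K ψ) (hA : 1 ≤ A) (hε : 0 < ε)
    (hfg : TamePair A ε f g) (hφ : IsTestFun ε φ) (hβ : ε ≤ |β|) (hβr : |β| ≤ 2 * r) (a : ℝ) :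
    |HstarAmp ψ ε f g φ a r| ≤ 1600 * A ^ 2 * r * cubicDecay ε β * ε * poissonKer ε a := by
  calc |HstarAmp ψ ε f g φ a r| ≤ 100 * A ^ 2 * ε * poissonKer ε r * poissonKer ε a :=
        abs_HstarAmp_le hψ hA hε hfg hφ a r
    _ ≤ 100 * A ^ 2 * ε * (16 * r * cubicDecay ε β) * poissonKer ε a := by
        gcongr
        exacts [poissonKer_nonneg hε.le a, poissonKer_le_mul_cubicDecay hε hβ hβr]
    _ = _ := by ring

lemma abs_HstarSym_le (hψ : IsLipschitzCutoff K ψ) (hA : 1 ≤ A) (hε : 0 < ε) (hε1 : ε ≤ 1)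
    (hfg : TamePair A ε f g) (hφ : IsTestFun ε φ) (hβ : |β| ≤ √ε) (hr : 0 < r) :
    |HstarSym ψ ε f g φ β r| ≤ 60000 * A ^ 2 * (1 + K) * cubicDecay ε β * ε *
      (poissonKer ε r + poissonKer ε (β + r) + poissonKer ε (β - r)) := by
  set P := poissonKer ε
  have hP (x : ℝ) : 0 ≤ P x := poissonKer_nonneg hε.le x
  have hD : 0 ≤ cubicDecay ε β := cubicDecay_nonneg hε.le β
  have h_amp : |HstarAmp ψ ε f g φ (β + r) r - HstarAmp ψ ε f g φ (β - r) r| ≤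
      60000 * A ^ 2 * (1 + K) * r * cubicDecay ε β * ε * (P r + P (β + r) + P (β - r)) := by
    by_cases h_near : |β| ≤ ε ∨ 2 * r ≤ |β|
    · refine (abs_HstarAmp_sub_le_of_near hψ hA hε hε1 hfg hφ hβ hr.le h_near).trans ?_
      gcongr
      linarith [hP (β + r), hP (β - r)]
    · obtain ⟨h_eps, h_r⟩ := not_or.1 h_near
      have h_far := abs_HstarAmp_le_of_far hψ hA hε hfg hφ (not_le.1 h_eps).le (not_le.1 h_r).le
      calc _ ≤ _ := (abs_sub _ _).trans (add_le_add (h_far (β + r)) (h_far (β - r)))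
        _ = 1600 * (A ^ 2 * r * cubicDecay ε β * ε * (P (β + r) + P (β - r))) := by ring
        _ ≤ 60000 * (1 + K) * (A ^ 2 * r * cubicDecay ε β * ε * (P r + P (β + r) + P (β - r))) := by
            have := hP (β + r)
            have := hP (β - r)
            gcongr
            · linarith [K.coe_nonneg]
            · linarith [hP r]
        _ = _ := by ring
  calc |HstarSym ψ ε f g φ β r|
      = r⁻¹ * |scut ψ (√ε / 2 ^ 6) r| *
          |HstarAmp ψ ε f g φ (β + r) r - HstarAmp ψ ε f g φ (β - r) r| := by
        rw [HstarSym, abs_mul, abs_mul, abs_inv, abs_of_pos hr]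
    _ ≤ r⁻¹ * 1 * (60000 * A ^ 2 * (1 + K) * r * cubicDecay ε β * ε *
          (P r + P (β + r) + P (β - r))) := by
        gcongr
        exact hψ.abs_scut_le_one _ _
    _ = _ := by
        field_simp

end AdjointOfH

section PrincipalValueOfH

variable {A ε β : ℝ} {K : NNReal} {ψ f g φ : ℝ → ℝ}

lemma integrable_cubicDecay (hε : 0 < ε) : Integrable (cubicDecay ε) := by
  have h_meas : Measurable (cubicDecay ε) := by
    unfold cubicDecay
    fun_prop
  refine ((integrable_poissonKer hε).const_mul (2 / ε)).mono' h_meas.aestronglyMeasurable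
    (.of_forall fun x ↦ ?_)
  have hD := cubicDecay_nonneg hε.le x
  rw [Real.norm_of_nonneg hD, div_mul_eq_mul_div, le_div_iff₀ hε]
  calc cubicDecay ε x * ε ≤ (|x| + ε) * cubicDecay ε x := by
        rw [mul_comm]
        gcongr
        linarith [abs_nonneg x]
    _ ≤ 2 * poissonKer ε x := abs_add_mul_cubicDecay_le hε x

lemma IsTestFun.integrable (hφ : IsTestFun ε φ) (hε : 0 < ε) : Integrable φ :=
  (integrable_poissonKer hε).mono' hφ.differentiable.continuous.aestronglyMeasurable
    (.of_forall hφ.abs_apply_le)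

lemma abs_Hker_le (hψ : IsLipschitzCutoff K ψ) (ε : ℝ) (f g : ℝ → ℝ) (α β : ℝ) :
    |Hker ψ ε f g α β| ≤ |α - β|⁻¹ := by
  have h_ratio : |Xt ε f g α ^ 2 / ((α - β) ^ 2 + Xt ε f g α ^ 2)| ≤ 1 := by
    rw [abs_of_nonneg (by positivity)]
    exact div_le_one_of_le₀ (le_add_of_nonneg_left (sq_nonneg _)) (by positivity)
  rw [Hker, abs_mul, abs_mul, abs_mul, abs_inv]
  calc _ ≤ |α - β|⁻¹ * 1 * 1 * 1 := by
        gcongr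
        exacts [hψ.abs_scut_le_one _ _, hψ.abs_scut_le_one _ _]
    _ = |α - β|⁻¹ := by ring

lemma measurable_Hker (hψ : IsLipschitzCutoff K ψ) (hfg : TamePair A ε f g) (β : ℝ) :
    Measurable fun α ↦ Hker ψ ε f g α β := by
  have hX := hfg.continuous_Xt.measurable
  have hcut := (hψ.continuous_scut (√ε / 2 ^ 6)).measurable
  unfold Hker
  fun_prop

lemma integrableOn_Hker_mul (hψ : IsLipschitzCutoff K ψ) (hε : 0 < ε) (hfg : TamePair A ε f g)
    (hφ : IsTestFun ε φ) (β : ℝ) {r : ℝ} (hr : 0 < r) :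
    IntegrableOn (fun α ↦ Hker ψ ε f g α β * φ α) {α | r < |β - α|} := by
  have h_meas : MeasurableSet {α : ℝ | r < |β - α|} := by
    rw [setOf_lt_abs_sub]
    exact measurableSet_Iio.union measurableSet_Ioi
  refine Integrable.bdd_mul (c := r⁻¹) (hφ.integrable hε).integrableOn
    (measurable_Hker hψ hfg β).aestronglyMeasurable ?_
  filter_upwards [ae_restrict_mem h_meas] with α hα
  rw [abs_sub_comm] at hα
  exact (abs_Hker_le hψ ε f g α β).trans (inv_anti₀ hr hα.le)

lemma measurable_HstarAmp (hψ : IsLipschitzCutoff K ψ) (hfg : TamePair A ε f g)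
    (hφ : IsTestFun ε φ) : Measurable fun p : ℝ × ℝ ↦ HstarAmp ψ ε f g φ p.1 p.2 := by
  have hX := hfg.continuous_Xt.measurable
  have hcut := (hψ.continuous_scut (√ε / 2 ^ 6)).measurable
  have hφ_meas := hφ.differentiable.continuous.measurable
  unfold HstarAmp poissonKer
  fun_prop

lemma measurable_HstarSym (hψ : IsLipschitzCutoff K ψ) (hfg : TamePair A ε f g)
    (hφ : IsTestFun ε φ) : Measurable fun p : ℝ × ℝ ↦ HstarSym ψ ε f g φ p.1 p.2 := by
  have h_amp := measurable_HstarAmp hψ hfg hφ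
  have hcut := (hψ.continuous_scut (√ε / 2 ^ 6)).measurable
  have h_add : Measurable fun p : ℝ × ℝ ↦ HstarAmp ψ ε f g φ (p.1 + p.2) p.2 :=
    h_amp.comp (f := fun p : ℝ × ℝ ↦ (p.1 + p.2, p.2)) (by fun_prop)
  have h_sub : Measurable fun p : ℝ × ℝ ↦ HstarAmp ψ ε f g φ (p.1 - p.2) p.2 :=
    h_amp.comp (f := fun p : ℝ × ℝ ↦ (p.1 - p.2, p.2)) (by fun_prop)
  exact (measurable_snd.inv.mul (hcut.comp measurable_snd)).mul (h_add.sub h_sub)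

lemma integrable_HstarAmp (hψ : IsLipschitzCutoff K ψ) (hA : 1 ≤ A) (hε : 0 < ε)
    (hfg : TamePair A ε f g) (hφ : IsTestFun ε φ) (r : ℝ) :
    Integrable fun a ↦ HstarAmp ψ ε f g φ a r :=
  ((integrable_poissonKer hε).const_mul (100 * A ^ 2 * ε * poissonKer ε r)).mono'
    ((measurable_HstarAmp hψ hfg hφ).comp measurable_prodMk_right).aestronglyMeasurable
    (.of_forall fun a ↦ abs_HstarAmp_le hψ hA hε hfg hφ a r)

lemma integral_HstarSym_eq_zero (hψ : IsLipschitzCutoff K ψ) (hA : 1 ≤ A) (hε : 0 < ε)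
    (hfg : TamePair A ε f g) (hφ : IsTestFun ε φ) (r : ℝ) :
    ∫ β, HstarSym ψ ε f g φ β r = 0 := by
  have h := integrable_HstarAmp hψ hA hε hfg hφ r
  unfold HstarSym
  rw [integral_const_mul, integral_sub (h.comp_add_right r) (h.comp_sub_right r),
    integral_add_right_eq_self (fun a ↦ HstarAmp ψ ε f g φ a r),
    integral_sub_right_eq_self (fun a ↦ HstarAmp ψ ε f g φ a r), sub_self, mul_zero]

lemma HstarSym_eq_zero (hψ : IsLipschitzCutoff K ψ) (hε : 0 < ε) (f g φ : ℝ → ℝ) {r : ℝ}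
    (hβ : √ε / 2 ^ 5 < |β|) : HstarSym ψ ε f g φ β r = 0 := by
  rw [← Hker_add_Hker_eq_HstarSym hψ, Hker_eq_zero hψ hε hβ, Hker_eq_zero hψ hε hβ]
  ring

lemma integrable_poissonKer_add_add (hε : 0 < ε) (β : ℝ) :
    Integrable fun r ↦ poissonKer ε r + poissonKer ε (β + r) + poissonKer ε (β - r) :=
  have h := integrable_poissonKer hε
  (h.add (h.comp_add_left β)).add (h.comp_sub_left β)

lemma integral_poissonKer_add_add (hε : 0 < ε) (β : ℝ) :
    ∫ r, (poissonKer ε r + poissonKer ε (β + r) + poissonKer ε (β - r)) = 3 * π := by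
  have h := integrable_poissonKer hε
  have h_pair : Integrable fun r ↦ poissonKer ε r + poissonKer ε (β + r) :=
    h.add (h.comp_add_left β)
  rw [integral_add h_pair (h.comp_sub_left β), integral_add h (h.comp_add_left β),
    integral_sub_left_eq_self (poissonKer ε), integral_add_left_eq_self (poissonKer ε),
    integral_poissonKer hε]
  ring

lemma integrableOn_HstarSym (hψ : IsLipschitzCutoff K ψ) (hA : 1 ≤ A) (hε : 0 < ε) (hε1 : ε ≤ 1)
    (hfg : TamePair A ε f g) (hφ : IsTestFun ε φ) (β : ℝ) :
    IntegrableOn (HstarSym ψ ε f g φ β) (Ioi 0) := by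
  by_cases hβ : |β| ≤ √ε
  · have h_dom := (integrable_poissonKer_add_add hε β).const_mul
      (60000 * A ^ 2 * (1 + K) * cubicDecay ε β * ε)
    refine h_dom.integrableOn.mono'
      ((measurable_HstarSym hψ hfg hφ).comp measurable_prodMk_left).aestronglyMeasurable ?_
    filter_upwards [ae_restrict_mem measurableSet_Ioi] with r hr
    exact abs_HstarSym_le hψ hA hε hε1 hfg hφ hβ hr
  · have hβ' : √ε / 2 ^ 5 < |β| := by linarith [Real.sqrt_nonneg ε]
    rw [show HstarSym ψ ε f g φ β = 0 from funext fun r ↦ HstarSym_eq_zero hψ hε f g φ hβ']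
    exact integrableOn_zero

lemma setIntegral_abs_HstarSym_le (hψ : IsLipschitzCutoff K ψ) (hA : 1 ≤ A) (hε : 0 < ε)
    (hε1 : ε ≤ 1) (hfg : TamePair A ε f g) (hφ : IsTestFun ε φ) (β : ℝ) :
    ∫ r in Ioi 0, |HstarSym ψ ε f g φ β r| ≤
      180000 * π * A ^ 2 * (1 + K) * ε * cubicDecay ε β := by
  have hD := cubicDecay_nonneg hε.le β
  by_cases hβ : |β| ≤ √ε
  · set c := 60000 * A ^ 2 * (1 + K) * cubicDecay ε β * ε with hc
    set S := fun r ↦ poissonKer ε r + poissonKer ε (β + r) + poissonKer ε (β - r)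
    have hS : Integrable S := integrable_poissonKer_add_add hε β
    have hS0 (r : ℝ) : 0 ≤ c * S r := by
      have hP (x : ℝ) : 0 ≤ poissonKer ε x := poissonKer_nonneg hε.le x
      exact mul_nonneg (by positivity) (add_nonneg (add_nonneg (hP _) (hP _)) (hP _))
    calc ∫ r in Ioi 0, |HstarSym ψ ε f g φ β r| ≤ ∫ r in Ioi 0, c * S r :=
          setIntegral_mono_on (integrableOn_HstarSym hψ hA hε hε1 hfg hφ β).abs
            (hS.const_mul c).integrableOn measurableSet_Ioi
            fun r hr ↦ abs_HstarSym_le hψ hA hε hε1 hfg hφ hβ hr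
      _ ≤ ∫ r, c * S r := setIntegral_le_integral (hS.const_mul c) (.of_forall hS0)
      _ = 180000 * π * A ^ 2 * (1 + K) * ε * cubicDecay ε β := by
          rw [integral_const_mul, integral_poissonKer_add_add hε, hc]
          ring
  · have hβ' : √ε / 2 ^ 5 < |β| := by linarith [Real.sqrt_nonneg ε]
    simp only [HstarSym_eq_zero hψ hε f g φ hβ', abs_zero, integral_zero]
    positivity

lemma Hstar_eq_integral_HstarSym (hψ : IsLipschitzCutoff K ψ) (hA : 1 ≤ A) (hε : 0 < ε)
    (hε1 : ε ≤ 1) (hfg : TamePair A ε f g) (hφ : IsTestFun ε φ) (β : ℝ) :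
    Hstar ψ ε f g φ β = (2 * π)⁻¹ * ∫ r in Ioi 0, HstarSym ψ ε f g φ β r := by
  have h_sym : (fun r ↦ Hker ψ ε f g (β + r) β * φ (β + r) +
      Hker ψ ε f g (β - r) β * φ (β - r)) = HstarSym ψ ε f g φ β :=
    funext (Hker_add_Hker_eq_HstarSym hψ ε f g φ β)
  rw [Hstar, pvI_eq_setIntegral_Ioi (fun r hr ↦ integrableOn_Hker_mul hψ hε hfg hφ β hr)
    (h_sym ▸ integrableOn_HstarSym hψ hA hε hε1 hfg hφ β), h_sym]

lemma abs_Hstar_le (hψ : IsLipschitzCutoff K ψ) (hA : 1 ≤ A) (hε : 0 < ε) (hε1 : ε ≤ 1)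
    (hfg : TamePair A ε f g) (hφ : IsTestFun ε φ) (β : ℝ) :
    |Hstar ψ ε f g φ β| ≤ 90000 * A ^ 2 * (1 + K) * ε * cubicDecay ε β := by
  rw [Hstar_eq_integral_HstarSym hψ hA hε hε1 hfg hφ, abs_mul,
    abs_of_pos (by positivity : 0 < (2 * π)⁻¹)]
  calc _ ≤ (2 * π)⁻¹ * (180000 * π * A ^ 2 * (1 + K) * ε * cubicDecay ε β) := by
        gcongr
        exact abs_integral_le_integral_abs.trans
          (setIntegral_abs_HstarSym_le hψ hA hε hε1 hfg hφ β)
    _ = _ := by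
        field_simp
        ring

lemma integrable_prod_HstarSym (hψ : IsLipschitzCutoff K ψ) (hA : 1 ≤ A) (hε : 0 < ε)
    (hε1 : ε ≤ 1) (hfg : TamePair A ε f g) (hφ : IsTestFun ε φ) :
    Integrable (fun p : ℝ × ℝ ↦ HstarSym ψ ε f g φ p.1 p.2)
      (volume.prod (volume.restrict (Ioi 0))) := by
  have h_meas := (measurable_HstarSym hψ hfg hφ).aestronglyMeasurable
    (μ := volume.prod (volume.restrict (Ioi 0)))
  refine (integrable_prod_iff h_meas).2
    ⟨.of_forall fun β ↦ integrableOn_HstarSym hψ hA hε hε1 hfg hφ β, ?_⟩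
  refine ((integrable_cubicDecay hε).const_mul (180000 * π * A ^ 2 * (1 + K) * ε)).mono'
    h_meas.norm.integral_prod_right' (.of_forall fun β ↦ ?_)
  rw [Real.norm_of_nonneg (integral_nonneg fun r ↦ norm_nonneg _)]
  exact setIntegral_abs_HstarSym_le hψ hA hε hε1 hfg hφ β

lemma integrable_Hstar (hψ : IsLipschitzCutoff K ψ) (hA : 1 ≤ A) (hε : 0 < ε) (hε1 : ε ≤ 1)
    (hfg : TamePair A ε f g) (hφ : IsTestFun ε φ) : Integrable (Hstar ψ ε f g φ) := by
  rw [funext (Hstar_eq_integral_HstarSym hψ hA hε hε1 hfg hφ)]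
  exact (integrable_prod_HstarSym hψ hA hε hε1 hfg hφ).integral_prod_left.const_mul _

lemma integral_Hstar_eq_zero (hψ : IsLipschitzCutoff K ψ) (hA : 1 ≤ A) (hε : 0 < ε) (hε1 : ε ≤ 1)
    (hfg : TamePair A ε f g) (hφ : IsTestFun ε φ) : ∫ β, Hstar ψ ε f g φ β = 0 := by
  simp only [Hstar_eq_integral_HstarSym hψ hA hε hε1 hfg hφ]
  rw [integral_const_mul, integral_integral_swap (integrable_prod_HstarSym hψ hA hε hε1 hfg hφ)]
  simp only [integral_HstarSym_eq_zero hψ hA hε hfg hφ, integral_zero, mul_zero]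

end PrincipalValueOfH

section DifferenceKernel

/-- The kernel of `T₃`. -/
def T3ker (ψ : ℝ → ℝ) (ε : ℝ) (f g : ℝ → ℝ) (α β : ℝ) : ℝ :=
  poissonKer (gap ε f g α β) (α - β) * scut ψ √ε (α - β)

/-- The kernel of the operator `M - T₃`. -/
def diffKer (ψ : ℝ → ℝ) (ε : ℝ) (f g : ℝ → ℝ) (α β : ℝ) : ℝ :=
  Mker ψ ε f g α β - T3ker ψ ε f g α β

/-- The part of the kernel of `M - T₃` due to freezing the argument of `g`. -/
def gapKer (ψ : ℝ → ℝ) (ε : ℝ) (f g : ℝ → ℝ) (α β : ℝ) : ℝ :=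
  (poissonKer (gap ε f g α α) (α - β) - poissonKer (gap ε f g α β) (α - β)) *
    scut ψ (√ε / 2 ^ 6) (α - β)

/-- The difference of the cutoffs of the operators `M` and `T₃`. -/
def scutDiff (ψ : ℝ → ℝ) (ε x : ℝ) : ℝ := scut ψ (√ε / 2 ^ 6) x - scut ψ √ε x

/-- The part of the kernel of `M - T₃` due to the two operators being cut off at different
radii. -/
def cutKer (ψ : ℝ → ℝ) (ε : ℝ) (f g : ℝ → ℝ) (α β : ℝ) : ℝ :=
  poissonKer (gap ε f g α β) (α - β) * scutDiff ψ ε (α - β)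

variable {A ε α β : ℝ} {K : NNReal} {ψ f g : ℝ → ℝ}

lemma T3_eq_integral_T3ker (ψ : ℝ → ℝ) (ε : ℝ) (f g h : ℝ → ℝ) (α : ℝ) :
    T3 ψ ε f g h α = (2 * π)⁻¹ * ∫ β, T3ker ψ ε f g α β * h β := by
  simp only [T3, T3ker, poissonKer, gap, mul_right_comm]

lemma diffKer_eq (hψ : IsLipschitzCutoff K ψ) (hε : 0 < ε) (f g : ℝ → ℝ)
    (hα : |α| ≤ √ε / 2 ^ 7) (β : ℝ) :
    diffKer ψ ε f g α β = gapKer ψ ε f g α β + cutKer ψ ε f g α β := by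
  have h_one : scut ψ (√ε / 2 ^ 6) α = 1 := hψ.scut_eq_one (by positivity) (by linarith)
  unfold diffKer Mker T3ker gapKer cutKer scutDiff poissonKer
  rw [h_one, Xt, gap, gap]
  ring

lemma abs_gapKer_le (hψ : IsLipschitzCutoff K ψ) (hA : 0 ≤ A) (hε : 0 < ε)
    (hfg : TamePair A ε f g) (α β : ℝ) :
    |gapKer ψ ε f g α β| ≤ 2 * A * (|α| + |β|) * (|β - α| + ε)⁻¹ := by
  have h_gap : |gap ε f g α α - gap ε f g α β| ≤ A * (|α| + |β|) * |α - β| := by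
    rw [gap, gap, add_sub_add_left_eq_sub]
    exact hfg.right.abs_sub_le α β
  have h_quot : |α - β| / ((α - β) ^ 2 + ε ^ 2) ≤ 2 * (|β - α| + ε)⁻¹ := by
    rw [abs_sub_comm β α, ← sq_abs (α - β), ← div_eq_mul_inv,
      div_le_div_iff₀ (by positivity) (by positivity)]
    nlinarith [sq_nonneg (|α - β| - ε), sq_nonneg |α - β|]
  calc |gapKer ψ ε f g α β|
      ≤ |gap ε f g α α - gap ε f g α β| / ((α - β) ^ 2 + ε ^ 2) * 1 := by
        rw [gapKer, abs_mul]
        gcongr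
        · exact abs_poissonKer_sub_le hε (hfg.le_gap _ _) (hfg.le_gap _ _) _
        · exact hψ.abs_scut_le_one _ _
    _ ≤ A * (|α| + |β|) * |α - β| / ((α - β) ^ 2 + ε ^ 2) * 1 := by gcongr
    _ = A * (|α| + |β|) * (|α - β| / ((α - β) ^ 2 + ε ^ 2)) := by ring
    _ ≤ A * (|α| + |β|) * (2 * (|β - α| + ε)⁻¹) := by gcongr
    _ = _ := by ring

lemma abs_gapKer_sub_le_of_near (hψ : IsLipschitzCutoff K ψ) (hA : 0 ≤ A) (hε : 0 < ε)
    (hfg : TamePair A ε f g) (h_near : |β| ≤ 2 * (|α| + ε)) :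
    |gapKer ψ ε f g α β - gapKer ψ ε f g 0 β| ≤
      6 * A * (|α| + ε) * ((|β| + ε)⁻¹ + (|β - α| + ε)⁻¹) := by
  have h_zero := abs_gapKer_le hψ hA hε hfg 0 β
  rw [abs_zero, zero_add, sub_zero] at h_zero
  calc _ ≤ _ := (abs_sub _ _).trans (add_le_add (abs_gapKer_le hψ hA hε hfg α β) h_zero)
    _ ≤ 2 * A * (3 * (|α| + ε)) * (|β - α| + ε)⁻¹ +
          2 * A * (3 * (|α| + ε)) * (|β| + ε)⁻¹ := by
        gcongr
        · linarith
        · linarith [abs_nonneg α]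
    _ = _ := by ring

lemma abs_poissonKer_gap_sub_sub_le (hA : 1 ≤ A) (hfg : TamePair A ε f g) (hβ : β ≠ 0)
    (hα : |α| ≤ 1) (hαβ : 2 * |α| ≤ |β|) :
    |(poissonKer (gap ε f g α α) (α - β) - poissonKer (gap ε f g α β) (α - β)) -
      (poissonKer (gap ε f g 0 0) (0 - β) - poissonKer (gap ε f g 0 β) (0 - β))| ≤
      42 * A ^ 2 * |α| / |β| := by
  have hβ0 : 0 < |β| := abs_pos.2 hβ
  have hα0 : 0 ≤ |α| := abs_nonneg α
  have h_sq : |α| ^ 2 ≤ |α| := by nlinarith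
  have hf0 : f 0 = 0 := hfg.left.flat.map_zero
  have hg0 : g 0 = 0 := hfg.right.flat.map_zero
  have h_second : |(gap ε f g α β - gap ε f g α α) - (gap ε f g 0 β - gap ε f g 0 0)| ≤
      A * (|α| * |β| / 2) := by
    rw [show gap ε f g α β - gap ε f g α α - (gap ε f g 0 β - gap ε f g 0 0) = -g α by
      simp only [gap, hf0, hg0]; ring, abs_neg]
    refine (hfg.right.abs_le α).trans ?_
    gcongr
    nlinarith
  have h_first : |gap ε f g 0 β - gap ε f g 0 0| ≤ A * |β| ^ 2 := by
    rw [show gap ε f g 0 β - gap ε f g 0 0 = g β by simp only [gap, hf0, hg0]; ring]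
    exact hfg.right.abs_le β
  have h_shift : |gap ε f g 0 β - gap ε f g α β| ≤ A * |α| :=
    (hfg.abs_gap_zero_sub_gap_le α β).trans (by gcongr)
  have h_shift' : |gap ε f g 0 0 - gap ε f g α α| ≤ 2 * A * |α| :=
    (hfg.abs_gap_zero_zero_sub_gap_self_le α).trans (by gcongr)
  refine (abs_poissonKer_sub_sub_le (ρ := |β| / 2) (by positivity) ?_ ?_).trans ?_
  · linarith [abs_sub_abs_le_abs_sub β α, abs_sub_comm α β]
  · rw [zero_sub, abs_neg]
    linarith
  rw [show 0 - β - (α - β) = -α by ring, abs_neg]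
  calc _ ≤ A * (|α| * |β| / 2) / (|β| / 2) ^ 2 +
        A * |β| ^ 2 * (2 * |α| + A * |α| + 2 * A * |α|) / (|β| / 2) ^ 3 := by
        gcongr ?_ / _ + ?_ * (_ + ?_ + ?_) / _
    _ = (18 * A + 24 * A ^ 2) * |α| / |β| := by
        field_simp
        ring
    _ ≤ 42 * A ^ 2 * |α| / |β| := by
        gcongr
        nlinarith

lemma abs_gapKer_sub_le_of_far (hψ : IsLipschitzCutoff K ψ) (hA : 1 ≤ A) (hε : 0 < ε)
    (hfg : TamePair A ε f g) (hβ : β ≠ 0) (hβ_le : |β| ≤ 2 * √ε) (hα : |α| ≤ 1)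
    (hαβ : 2 * |α| ≤ |β|) :
    |gapKer ψ ε f g α β - gapKer ψ ε f g 0 β| ≤ 128 * A ^ 2 * (1 + K) * (|α| / |β|) := by
  have hβ0 : 0 < |β| := abs_pos.2 hβ
  set D := fun α ↦ poissonKer (gap ε f g α α) (α - β) - poissonKer (gap ε f g α β) (α - β)
  set c := fun α ↦ scut ψ (√ε / 2 ^ 6) (α - β)
  have D_zero : |D 0| ≤ A := by
    calc |D 0| ≤ |gap ε f g 0 0 - gap ε f g 0 β| / ((0 - β) ^ 2 + ε ^ 2) :=
          abs_poissonKer_sub_le hε (hfg.le_gap _ _) (hfg.le_gap _ _) _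
      _ ≤ A * |β| ^ 2 / |β| ^ 2 := by
          rw [gap, gap, add_sub_add_left_eq_sub, zero_sub, neg_sq, sq_abs β]
          gcongr
          · simpa [sq, mul_assoc] using hfg.right.abs_sub_le 0 β
          · exact le_add_of_nonneg_right (sq_nonneg ε)
      _ = A := by field_simp
  have D_sub : |D α - D 0| ≤ 42 * A ^ 2 * |α| / |β| :=
    abs_poissonKer_gap_sub_sub_le hA hfg hβ hα hαβ
  have c_sub : |c α - c 0| ≤ 128 * K * |α| / |β| := by
    have h := hψ.abs_scut_sub_le (by positivity : 0 < √ε / 2 ^ 6) (α - β) (0 - β)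
    rw [sub_sub_sub_cancel_right, sub_zero] at h
    refine h.trans ?_
    rw [div_le_div_iff₀ (by positivity) hβ0]
    have := mul_le_mul_of_nonneg_left hβ_le (mul_nonneg K.coe_nonneg (abs_nonneg α))
    linarith
  calc |gapKer ψ ε f g α β - gapKer ψ ε f g 0 β| = |(D α - D 0) * c α + D 0 * (c α - c 0)| := by
        rw [show gapKer ψ ε f g α β = D α * c α from rfl,
          show gapKer ψ ε f g 0 β = D 0 * c 0 from rfl]
        ring_nf
    _ ≤ |D α - D 0| * |c α| + |D 0| * |c α - c 0| := by
        rw [← abs_mul, ← abs_mul]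
        exact abs_add_le _ _
    _ ≤ 42 * A ^ 2 * |α| / |β| * 1 + A * (128 * K * |α| / |β|) := by
        gcongr
        exact hψ.abs_scut_le_one _ _
    _ = (42 * A ^ 2 + 128 * A * K) * (|α| / |β|) := by ring
    _ ≤ 128 * A ^ 2 * (1 + K) * (|α| / |β|) := by
        gcongr
        have : A * K ≤ A ^ 2 * K := by gcongr; nlinarith
        nlinarith

lemma abs_gapKer_sub_le (hψ : IsLipschitzCutoff K ψ) (hA : 1 ≤ A) (hε : 0 < ε)
    (hfg : TamePair A ε f g) (hβ : |β| ≤ 2 * √ε) (hα : |α| ≤ 1) :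
    |gapKer ψ ε f g α β - gapKer ψ ε f g 0 β| ≤
      256 * A ^ 2 * (1 + K) * (|α| + ε) * ((|β| + ε)⁻¹ + (|β - α| + ε)⁻¹) := by
  have hα0 := abs_nonneg α
  have hK := K.coe_nonneg
  rcases le_or_gt |β| (2 * (|α| + ε)) with h_near | h_far
  · refine (abs_gapKer_sub_le_of_near hψ (by linarith) hε hfg h_near).trans ?_
    have : 6 * A ≤ 256 * A ^ 2 * (1 + K) := by nlinarith [mul_nonneg (sq_nonneg A) hK]
    gcongr ?_ * _ * _
  · have hβ0 : 0 < |β| := by linarith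
    calc _ ≤ 128 * A ^ 2 * (1 + K) * (|α| / |β|) :=
          abs_gapKer_sub_le_of_far hψ hA hε hfg (abs_pos.1 hβ0) hβ hα (by linarith)
      _ ≤ 128 * A ^ 2 * (1 + K) * (2 * (|α| + ε) * (|β| + ε)⁻¹) := by
          gcongr
          rw [← div_eq_mul_inv, div_le_div_iff₀ hβ0 (by positivity)]
          nlinarith
      _ = 256 * A ^ 2 * (1 + K) * (|α| + ε) * ((|β| + ε)⁻¹ + 0) := by ring
      _ ≤ _ := by
          gcongr
          positivity

lemma abs_scutDiff_le_one (hψ : IsLipschitzCutoff K ψ) (ε x : ℝ) : |scutDiff ψ ε x| ≤ 1 :=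
  abs_sub_le_of_nonneg_of_le (hψ.mem_Icc _).1 (hψ.mem_Icc _).2 (hψ.mem_Icc _).1 (hψ.mem_Icc _).2

lemma scutDiff_eq_zero (hψ : IsLipschitzCutoff K ψ) (hε : 0 < ε) {x : ℝ}
    (hx : |x| ≤ √ε / 2 ^ 7) : scutDiff ψ ε x = 0 := by
  have hs : 0 < √ε := Real.sqrt_pos.2 hε
  rw [scutDiff, hψ.scut_eq_one (by positivity) (by linarith),
    hψ.scut_eq_one hs (by linarith), sub_self]

lemma abs_scutDiff_sub_le (hψ : IsLipschitzCutoff K ψ) (hε : 0 < ε) (x y : ℝ) :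
    |scutDiff ψ ε x - scutDiff ψ ε y| ≤ 65 * K * (|x - y| / √ε) := by
  have hs : 0 < √ε := Real.sqrt_pos.2 hε
  calc |scutDiff ψ ε x - scutDiff ψ ε y|
      = |(scut ψ (√ε / 2 ^ 6) x - scut ψ (√ε / 2 ^ 6) y) - (scut ψ √ε x - scut ψ √ε y)| := by
        rw [scutDiff, scutDiff, sub_sub_sub_comm]
    _ ≤ K * |x - y| / (√ε / 2 ^ 6) + K * |x - y| / √ε :=
        (abs_sub _ _).trans (add_le_add (hψ.abs_scut_sub_le (by positivity) x y)
          (hψ.abs_scut_sub_le hs x y))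
    _ = 65 * K * (|x - y| / √ε) := by
        field_simp
        ring

lemma poissonKer_gap_le_of_far (hA : 1 ≤ A) (hε : 0 < ε) (hfg : TamePair A ε f g) (a b : ℝ) {x : ℝ}
    (hx : √ε / 2 ^ 8 ≤ |x|) : poissonKer (gap ε f g a b) x ≤ 10 * 2 ^ 16 * A := by
  have hx0 : x ≠ 0 := abs_pos.1 ((by positivity : 0 < √ε / 2 ^ 8).trans_le hx)
  calc poissonKer (gap ε f g a b) x ≤ gap ε f g a b / x ^ 2 :=
        poissonKer_le_div_sq (hfg.gap_pos hε a b).le hx0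
    _ ≤ 10 * A * √ε ^ 2 / (√ε / 2 ^ 8) ^ 2 := by
        rw [← sq_abs x]
        gcongr
        rw [Real.sq_sqrt hε.le]
        exact hfg.gap_le hA hε.le a b
    _ = 10 * 2 ^ 16 * A := by field_simp

lemma abs_poissonKer_gap_sub_le_of_far (hA : 1 ≤ A) (hε : 0 < ε) (hfg : TamePair A ε f g)
    (hα : |α| ≤ √ε / 2 ^ 8) (hβ : √ε / 2 ^ 8 ≤ |0 - β|) (hαβ : √ε / 2 ^ 8 ≤ |α - β|) :
    |poissonKer (gap ε f g α β) (α - β) - poissonKer (gap ε f g 0 β) (0 - β)| ≤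
      35 * 10 ^ 7 * A * (|α| / √ε) := by
  have h_gap : |poissonKer (gap ε f g α β) (α - β) - poissonKer (gap ε f g 0 β) (α - β)| ≤
      2 ^ 8 * A * (|α| / √ε) := by
    calc _ ≤ |gap ε f g α β - gap ε f g 0 β| / ((α - β) ^ 2 + ε ^ 2) :=
          abs_poissonKer_sub_le hε (hfg.le_gap _ _) (hfg.le_gap _ _) _
      _ ≤ A * (√ε / 2 ^ 8 * |α|) / (√ε / 2 ^ 8) ^ 2 := by
          rw [abs_sub_comm (gap ε f g α β), ← sq_abs (α - β)]
          gcongr ?_ / ?_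
          · refine (hfg.abs_gap_zero_sub_gap_le α β).trans ?_
            rw [sq]
            gcongr
          · exact le_add_of_le_of_nonneg (by gcongr) (sq_nonneg ε)
      _ = 2 ^ 8 * A * (|α| / √ε) := by field_simp
  have h_shift : |poissonKer (gap ε f g 0 β) (α - β) - poissonKer (gap ε f g 0 β) (0 - β)| ≤
      20 * 2 ^ 24 * A * (|α| / √ε) := by
    calc _ ≤ 2 * gap ε f g 0 β * |α - β - (0 - β)| / (√ε / 2 ^ 8) ^ 3 :=
          abs_poissonKer_sub_poissonKer_le (by positivity) (hfg.gap_pos hε 0 β).le hαβ hβ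
      _ ≤ 2 * (10 * A * √ε ^ 2) * |α| / (√ε / 2 ^ 8) ^ 3 := by
          rw [sub_sub_sub_cancel_right, sub_zero, Real.sq_sqrt hε.le]
          gcongr
          exact hfg.gap_le hA hε.le 0 β
      _ = 20 * 2 ^ 24 * A * (|α| / √ε) := by
          field_simp
          ring
  have h_nonneg : 0 ≤ A * (|α| / √ε) := by positivity
  linarith [abs_sub_le (poissonKer (gap ε f g α β) (α - β)) (poissonKer (gap ε f g 0 β) (α - β))
    (poissonKer (gap ε f g 0 β) (0 - β))]

lemma abs_cutKer_sub_le (hψ : IsLipschitzCutoff K ψ) (hA : 1 ≤ A) (hε : 0 < ε)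
    (hfg : TamePair A ε f g) (hα : |α| ≤ √ε / 2 ^ 8) :
    |cutKer ψ ε f g α β - cutKer ψ ε f g 0 β| ≤ 4 * 10 ^ 8 * A * (1 + K) * (|α| / √ε) := by
  set P := fun a ↦ poissonKer (gap ε f g a β) (a - β)
  set χ := fun a ↦ scutDiff ψ ε (a - β)
  have h_dist : |β| ≤ |α - β| + |α| := by
    linarith [abs_sub_abs_le_abs_sub β α, abs_sub_comm α β]
  have h_zero_sub : |0 - β| = |β| := by rw [zero_sub, abs_neg]
  change |P α * χ α - P 0 * χ 0| ≤ _
  by_cases h_near : |α - β| ≤ √ε / 2 ^ 7 ∧ |0 - β| ≤ √ε / 2 ^ 7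
  · rw [show χ α = 0 from scutDiff_eq_zero hψ hε h_near.1,
      show χ 0 = 0 from scutDiff_eq_zero hψ hε h_near.2, mul_zero, mul_zero, sub_zero, abs_zero]
    positivity
  obtain ⟨hαβ, hβ⟩ : √ε / 2 ^ 8 ≤ |α - β| ∧ √ε / 2 ^ 8 ≤ |0 - β| := by
    rw [not_and_or, not_le, not_le] at h_near
    rcases h_near with h | h <;> constructor <;> linarith [abs_sub α β]
  have h_P : |P 0| ≤ 10 * 2 ^ 16 * A :=
    (abs_of_nonneg (poissonKer_nonneg (hfg.gap_pos hε 0 β).le _)).trans_le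
      (poissonKer_gap_le_of_far hA hε hfg 0 β hβ)
  have h_χ : |χ α - χ 0| ≤ 65 * K * (|α| / √ε) := by
    simpa only [sub_sub_sub_cancel_right, sub_zero] using
      abs_scutDiff_sub_le hψ hε (α - β) (0 - β)
  calc |P α * χ α - P 0 * χ 0| = |(P α - P 0) * χ α + P 0 * (χ α - χ 0)| := by ring_nf
    _ ≤ |P α - P 0| * |χ α| + |P 0| * |χ α - χ 0| := by
        rw [← abs_mul, ← abs_mul]
        exact abs_add_le _ _
    _ ≤ 35 * 10 ^ 7 * A * (|α| / √ε) * 1 + 10 * 2 ^ 16 * A * (65 * K * (|α| / √ε)) := by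
        gcongr
        · exact abs_poissonKer_gap_sub_le_of_far hA hε hfg hα hβ hαβ
        · exact abs_scutDiff_le_one hψ _ _
    _ = (35 * 10 ^ 7 + 10 * 2 ^ 16 * 65 * K) * A * (|α| / √ε) := by ring
    _ ≤ 4 * 10 ^ 8 * (1 + K) * A * (|α| / √ε) := by
        gcongr ?_ * _ * _
        linarith
    _ = _ := by ring

lemma abs_diffKer_sub_le_inv_add_inv (hψ : IsLipschitzCutoff K ψ) (hA : 1 ≤ A) (hε : 0 < ε)
    (hε1 : ε ≤ 1) (hfg : TamePair A ε f g) (hβ : |β| ≤ 2 * √ε) (hα : |α| ≤ √ε / 2 ^ 8) :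
    |diffKer ψ ε f g α β - diffKer ψ ε f g 0 β| ≤
      2 * 10 ^ 9 * A ^ 2 * (1 + K) * (|α| + ε) * ((|β| + ε)⁻¹ + (|β - α| + ε)⁻¹) := by
  have hs : 0 < √ε := Real.sqrt_pos.2 hε
  have hs1 : √ε ≤ 1 := Real.sqrt_le_one.2 hε1
  have h_sqrt : (√ε)⁻¹ ≤ 3 * ((|β| + ε)⁻¹ + (|β - α| + ε)⁻¹) := by
    have h_le : ε ≤ √ε := Real.le_sqrt_of_sq_le (by nlinarith)
    calc (√ε)⁻¹ = 3 * (2 * √ε + √ε)⁻¹ := by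
          field_simp
          norm_num
      _ ≤ 3 * ((|β| + ε)⁻¹ + 0) := by
          rw [add_zero]
          gcongr
      _ ≤ _ := by
          gcongr
          positivity
  rw [diffKer_eq hψ hε f g (by linarith), diffKer_eq hψ hε f g
    (by rw [abs_zero]; positivity), add_sub_add_comm]
  set S := (|β| + ε)⁻¹ + (|β - α| + ε)⁻¹
  calc _ ≤ 256 * A ^ 2 * (1 + K) * (|α| + ε) * S + 4 * 10 ^ 8 * A * (1 + K) * (|α| / √ε) :=
        (abs_add_le _ _).trans (add_le_add (abs_gapKer_sub_le hψ hA hε hfg hβ (by linarith))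
          (abs_cutKer_sub_le hψ hA hε hfg hα))
    _ ≤ 256 * A ^ 2 * (1 + K) * (|α| + ε) * S +
          4 * 10 ^ 8 * A ^ 2 * (1 + K) * ((|α| + ε) * (3 * S)) := by
        rw [div_eq_mul_inv]
        gcongr
        · exact le_self_pow₀ hA two_ne_zero
        · exact le_add_of_nonneg_right hε.le
    _ = (256 + 12 * 10 ^ 8) * (A ^ 2 * (1 + K) * (|α| + ε) * S) := by ring
    _ ≤ 2 * 10 ^ 9 * (A ^ 2 * (1 + K) * (|α| + ε) * S) := by
        gcongr
        norm_num
    _ = _ := by ring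

end DifferenceKernel

section DifferenceOperator

variable {A B M ε α β a : ℝ} {K : NNReal} {ψ f g h : ℝ → ℝ}

lemma continuous_inv_abs_add (hε : 0 < ε) : Continuous fun x : ℝ ↦ (|x| + ε)⁻¹ := by
  fun_prop (disch := intro; positivity)

lemma integral_inv_abs_add (hε : 0 < ε) (ha : 0 ≤ a) :
    ∫ x in -a..a, (|x| + ε)⁻¹ = 2 * log ((a + ε) / ε) := by
  have h_int (u v : ℝ) := (continuous_inv_abs_add hε).intervalIntegrable (μ := volume) u v
  have h_neg : ∫ x in -a..0, (|x| + ε)⁻¹ = ∫ x in 0..a, (|x| + ε)⁻¹ := by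
    simpa only [abs_neg, neg_zero] using
      (intervalIntegral.integral_comp_neg (a := 0) (b := a) fun x : ℝ ↦ (|x| + ε)⁻¹).symm
  have h_pos : ∫ x in 0..a, (|x| + ε)⁻¹ = log ((a + ε) / ε) := by
    calc ∫ x in 0..a, (|x| + ε)⁻¹ = ∫ x in 0..a, (x + ε)⁻¹ :=
          intervalIntegral.integral_congr fun x hx ↦ by
            rw [uIcc_of_le ha] at hx
            simp only [abs_of_nonneg hx.1]
      _ = log ((a + ε) / ε) := by
          rw [intervalIntegral.integral_comp_add_right (fun x ↦ x⁻¹), zero_add,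
            integral_inv_of_pos hε (by linarith)]
  rw [← intervalIntegral.integral_add_adjacent_intervals (h_int _ 0) (h_int 0 _), h_neg, h_pos]
  ring

/-- The kernel `1 / (|x| + ε)` restricted to `[-1/2, 1/2]`; its mass is the source of the logarithm
in the main estimate. -/
def logKer (ε : ℝ) : ℝ → ℝ := (Icc (-(1 / 2)) (1 / 2)).indicator fun x ↦ (|x| + ε)⁻¹

lemma logKer_nonneg (hε : 0 ≤ ε) (x : ℝ) : 0 ≤ logKer ε x :=
  indicator_nonneg (fun _ _ ↦ by positivity) x

lemma integrable_logKer (hε : 0 < ε) : Integrable (logKer ε) :=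
  ((continuous_inv_abs_add hε).integrableOn_Icc).integrable_indicator measurableSet_Icc

lemma integral_logKer_le (hε : 0 < ε) (hε1 : ε ≤ 1 / 2) :
    ∫ x, logKer ε x ≤ 2 * log (1 / ε) := by
  unfold logKer
  rw [integral_indicator measurableSet_Icc, integral_Icc_eq_integral_Ioc,
    ← intervalIntegral.integral_of_le (by norm_num), integral_inv_abs_add hε (by norm_num)]
  gcongr
  linarith

lemma Mker_eq_zero (hψ : IsLipschitzCutoff K ψ) (hε : 0 < ε) (f g : ℝ → ℝ)
    (hαβ : √ε / 2 ^ 6 < |α - β|) : Mker ψ ε f g α β = 0 := by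
  rw [Mker, hψ.scut_eq_zero (x := α - β) (by positivity) hαβ, mul_zero]

lemma T3ker_eq_zero (hψ : IsLipschitzCutoff K ψ) (hε : 0 < ε) (f g : ℝ → ℝ)
    (hαβ : √ε < |α - β|) : T3ker ψ ε f g α β = 0 := by
  rw [T3ker, hψ.scut_eq_zero (Real.sqrt_pos.2 hε) hαβ, mul_zero]

lemma diffKer_eq_zero (hψ : IsLipschitzCutoff K ψ) (hε : 0 < ε) (f g : ℝ → ℝ)
    (hαβ : √ε < |α - β|) : diffKer ψ ε f g α β = 0 := by
  have hs : 0 < √ε := Real.sqrt_pos.2 hε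
  rw [diffKer, Mker_eq_zero hψ hε f g (by linarith), T3ker_eq_zero hψ hε f g hαβ, sub_zero]

lemma abs_diffKer_sub_le (hψ : IsLipschitzCutoff K ψ) (hA : 1 ≤ A) (hε : 0 < ε)
    (hε1 : ε ≤ 1 / 100) (hfg : TamePair A ε f g) (hα : |α| ≤ √ε / 2 ^ 8) (β : ℝ) :
    |diffKer ψ ε f g α β - diffKer ψ ε f g 0 β| ≤
      2 * 10 ^ 9 * A ^ 2 * (1 + K) * (|α| + ε) * (logKer ε β + logKer ε (β - α)) := by
  have hs : 0 < √ε := Real.sqrt_pos.2 hε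
  have h_dist : |β| ≤ |α - β| + |α| := by
    linarith [abs_sub_abs_le_abs_sub β α, abs_sub_comm α β]
  by_cases hβ : |β| ≤ 2 * √ε
  · have hs1 : √ε ≤ 1 / 10 := Real.sqrt_le_iff.2 ⟨by norm_num, by linarith⟩
    have h_mem : β ∈ Icc (-(1 / 2)) (1 / 2) := abs_le.1 (by linarith)
    have h_mem' : β - α ∈ Icc (-(1 / 2)) (1 / 2) := abs_le.1 (by linarith [abs_sub β α])
    rw [logKer, indicator_of_mem h_mem, indicator_of_mem h_mem']
    exact abs_diffKer_sub_le_inv_add_inv hψ hA hε (by linarith) hfg hβ hα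
  · rw [diffKer_eq_zero hψ hε f g (by linarith),
      diffKer_eq_zero hψ hε f g (by rw [zero_sub, abs_neg]; linarith), sub_zero, abs_zero]
    have := logKer_nonneg hε.le β
    have := logKer_nonneg hε.le (β - α)
    positivity

lemma abs_Mker_le (hψ : IsLipschitzCutoff K ψ) (hA : 1 ≤ A) (hε : 0 < ε)
    (hfg : TamePair A ε f g) (α β : ℝ) :
    |Mker ψ ε f g α β| ≤ 10 * A * poissonKer ε (α - β) := by
  have h_nonneg := poissonKer_nonneg (hfg.gap_pos hε α α).le (α - β)
  rw [show Mker ψ ε f g α β = poissonKer (gap ε f g α α) (α - β) *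
    (scut ψ (√ε / 2 ^ 6) α * scut ψ (√ε / 2 ^ 6) (α - β)) from mul_assoc _ _ _,
    abs_mul, abs_mul, abs_of_nonneg h_nonneg]
  refine (mul_le_of_le_one_right h_nonneg ?_).trans
    (poissonKer_le_mul hε (hfg.le_gap _ _) (hfg.gap_le hA hε.le _ _) _)
  exact mul_le_one₀ (hψ.abs_scut_le_one _ _) (abs_nonneg _) (hψ.abs_scut_le_one _ _)

lemma abs_T3ker_le (hψ : IsLipschitzCutoff K ψ) (hA : 1 ≤ A) (hε : 0 < ε)
    (hfg : TamePair A ε f g) (α β : ℝ) :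
    |T3ker ψ ε f g α β| ≤ 10 * A * poissonKer ε (α - β) := by
  have h_nonneg := poissonKer_nonneg (hfg.gap_pos hε α β).le (α - β)
  rw [T3ker, abs_mul, abs_of_nonneg h_nonneg]
  exact (mul_le_of_le_one_right h_nonneg (hψ.abs_scut_le_one _ _)).trans
    (poissonKer_le_mul hε (hfg.le_gap _ _) (hfg.gap_le hA hε.le _ _) _)

lemma measurable_Mker (hψ : IsLipschitzCutoff K ψ) (hfg : TamePair A ε f g) :
    Measurable fun p : ℝ × ℝ ↦ Mker ψ ε f g p.1 p.2 := by
  have := hfg.continuous_Xt.measurable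
  have := (hψ.continuous_scut (√ε / 2 ^ 6)).measurable
  unfold Mker
  fun_prop

lemma measurable_T3ker (hψ : IsLipschitzCutoff K ψ) (hfg : TamePair A ε f g) :
    Measurable fun p : ℝ × ℝ ↦ T3ker ψ ε f g p.1 p.2 := by
  have := hfg.continuous_gap.measurable
  have := (hψ.continuous_scut √ε).measurable
  unfold T3ker poissonKer
  fun_prop

lemma integrable_mul_of_abs_le_poissonKer {k : ℝ → ℝ} (hk : Measurable k)
    (hkB : ∀ β, |k β| ≤ B * poissonKer ε (α - β)) (hε : 0 < ε) (hh : Measurable h)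
    (hM : ∀ x, |h x| ≤ M) : Integrable fun β ↦ k β * h β := by
  have h_int : Integrable k := (((integrable_poissonKer hε).comp_sub_left α).const_mul B).mono'
    hk.aestronglyMeasurable (.of_forall hkB)
  exact h_int.mul_bdd (c := M) hh.aestronglyMeasurable (.of_forall hM)

lemma integrable_Mker_mul (hψ : IsLipschitzCutoff K ψ) (hA : 1 ≤ A) (hε : 0 < ε)
    (hfg : TamePair A ε f g) (hh : Measurable h) (hM : ∀ x, |h x| ≤ M) (α : ℝ) :
    Integrable fun β ↦ Mker ψ ε f g α β * h β :=
  integrable_mul_of_abs_le_poissonKer ((measurable_Mker hψ hfg).comp measurable_prodMk_left)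
    (abs_Mker_le hψ hA hε hfg α) hε hh hM

lemma integrable_T3ker_mul (hψ : IsLipschitzCutoff K ψ) (hA : 1 ≤ A) (hε : 0 < ε)
    (hfg : TamePair A ε f g) (hh : Measurable h) (hM : ∀ x, |h x| ≤ M) (α : ℝ) :
    Integrable fun β ↦ T3ker ψ ε f g α β * h β :=
  integrable_mul_of_abs_le_poissonKer ((measurable_T3ker hψ hfg).comp measurable_prodMk_left)
    (abs_T3ker_le hψ hA hε hfg α) hε hh hM

lemma integrable_diffKer_mul (hψ : IsLipschitzCutoff K ψ) (hA : 1 ≤ A) (hε : 0 < ε)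
    (hfg : TamePair A ε f g) (hh : Measurable h) (hM : ∀ x, |h x| ≤ M) (α : ℝ) :
    Integrable fun β ↦ diffKer ψ ε f g α β * h β := by
  simp only [diffKer, sub_mul]
  exact (integrable_Mker_mul hψ hA hε hfg hh hM α).sub (integrable_T3ker_mul hψ hA hε hfg hh hM α)

lemma Mop_sub_T3_eq (hψ : IsLipschitzCutoff K ψ) (hA : 1 ≤ A) (hε : 0 < ε)
    (hfg : TamePair A ε f g) (hh : Measurable h) (hM : ∀ x, |h x| ≤ M) (α : ℝ) :
    Mop ψ ε f g h α - T3 ψ ε f g h α = (2 * π)⁻¹ * ∫ β, diffKer ψ ε f g α β * h β := by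
  simp only [diffKer, sub_mul]
  rw [integral_sub (integrable_Mker_mul hψ hA hε hfg hh hM α)
    (integrable_T3ker_mul hψ hA hε hfg hh hM α), T3_eq_integral_T3ker, Mop, mul_sub]

lemma measurable_Mop_sub_T3 (hψ : IsLipschitzCutoff K ψ) (hA : 1 ≤ A) (hε : 0 < ε)
    (hfg : TamePair A ε f g) (hh : Measurable h) (hM : ∀ x, |h x| ≤ M) :
    Measurable fun α ↦ Mop ψ ε f g h α - T3 ψ ε f g h α := by
  simp only [Mop_sub_T3_eq hψ hA hε hfg hh hM]
  have h_meas : Measurable fun p : ℝ × ℝ ↦ diffKer ψ ε f g p.1 p.2 * h p.2 :=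
    ((measurable_Mker hψ hfg).sub (measurable_T3ker hψ hfg)).mul (hh.comp measurable_snd)
  exact (h_meas.stronglyMeasurable.integral_prod_right').measurable.const_mul _

lemma abs_Mop_sub_T3_le (hψ : IsLipschitzCutoff K ψ) (hA : 1 ≤ A) (hε : 0 < ε)
    (hfg : TamePair A ε f g) (hh : Measurable h) (hM : ∀ x, |h x| ≤ M) (α : ℝ) :
    |Mop ψ ε f g h α - T3 ψ ε f g h α| ≤ 10 * A * M := by
  have h_bound (β : ℝ) : ‖diffKer ψ ε f g α β * h β‖ ≤ 20 * A * M * poissonKer ε (α - β) := by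
    have h_nonneg := poissonKer_nonneg hε.le (α - β)
    calc ‖diffKer ψ ε f g α β * h β‖
        ≤ (10 * A * poissonKer ε (α - β) + 10 * A * poissonKer ε (α - β)) * M := by
          rw [norm_mul]
          gcongr
          · exact (abs_sub _ _).trans (add_le_add (abs_Mker_le hψ hA hε hfg α β)
              (abs_T3ker_le hψ hA hε hfg α β))
          · exact hM β
      _ = 20 * A * M * poissonKer ε (α - β) := by ring
  rw [Mop_sub_T3_eq hψ hA hε hfg hh hM, abs_mul, abs_of_pos (by positivity : 0 < (2 * π)⁻¹)]
  calc _ ≤ (2 * π)⁻¹ * ∫ β, 20 * A * M * poissonKer ε (α - β) := by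
        gcongr
        exact norm_integral_le_of_norm_le
          (((integrable_poissonKer hε).comp_sub_left α).const_mul _) (.of_forall h_bound)
    _ = 10 * A * M := by
        rw [integral_const_mul, integral_sub_left_eq_self (poissonKer ε), integral_poissonKer hε]
        field_simp
        ring

lemma abs_Mop_sub_T3_sub_le (hψ : IsLipschitzCutoff K ψ) (hA : 1 ≤ A) (hε : 0 < ε)
    (hε1 : ε ≤ 1 / 100) (hfg : TamePair A ε f g) (hh : Measurable h) (hM : ∀ x, |h x| ≤ M)
    (hα : |α| ≤ √ε / 2 ^ 8) :
    |(Mop ψ ε f g h α - T3 ψ ε f g h α) - (Mop ψ ε f g h 0 - T3 ψ ε f g h 0)| ≤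
      2 * 10 ^ 9 * A ^ 2 * (1 + K) * M * log (1 / ε) * (|α| + ε) := by
  have hM0 : 0 ≤ M := (abs_nonneg _).trans (hM 0)
  have h_log : 0 ≤ log (1 / ε) := Real.log_nonneg (by rw [le_div_iff₀ hε]; linarith)
  have h_int := integrable_logKer hε
  have h_bound (β : ℝ) : ‖diffKer ψ ε f g α β * h β - diffKer ψ ε f g 0 β * h β‖ ≤
      2 * 10 ^ 9 * A ^ 2 * (1 + K) * (|α| + ε) * M * (logKer ε β + logKer ε (β - α)) := by
    rw [← sub_mul, norm_mul, mul_right_comm _ M]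
    gcongr
    · exact (abs_nonneg _).trans (abs_diffKer_sub_le hψ hA hε hε1 hfg hα β)
    · exact abs_diffKer_sub_le hψ hA hε hε1 hfg hα β
    · exact hM β
  have h_mass : ∫ β, (logKer ε β + logKer ε (β - α)) ≤ 4 * log (1 / ε) := by
    rw [integral_add h_int (h_int.comp_sub_right α), integral_sub_right_eq_self (logKer ε)]
    linarith [integral_logKer_le hε (by linarith)]
  rw [Mop_sub_T3_eq hψ hA hε hfg hh hM, Mop_sub_T3_eq hψ hA hε hfg hh hM, ← mul_sub,
    ← integral_sub (integrable_diffKer_mul hψ hA hε hfg hh hM α)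
      (integrable_diffKer_mul hψ hA hε hfg hh hM 0), abs_mul,
    abs_of_pos (by positivity : 0 < (2 * π)⁻¹)]
  have h_int_add : Integrable fun β ↦ logKer ε β + logKer ε (β - α) :=
    h_int.add (h_int.comp_sub_right α)
  calc _ ≤ (2 * π)⁻¹ * (2 * 10 ^ 9 * A ^ 2 * (1 + K) * (|α| + ε) * M * (4 * log (1 / ε))) := by
        gcongr
        refine (norm_integral_le_of_norm_le (h_int_add.const_mul _) (.of_forall h_bound)).trans ?_
        rw [integral_const_mul]
        gcongr
    _ = (2 / π) * (2 * 10 ^ 9 * A ^ 2 * (1 + K) * M * log (1 / ε) * (|α| + ε)) := by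
        rw [mul_inv]
        ring
    _ ≤ _ := mul_le_of_le_one_left (by positivity)
        (by rw [div_le_one Real.pi_pos]; linarith [Real.pi_gt_three])

end DifferenceOperator

section Pairing

variable {A C₁ C₂ D M c ε : ℝ} {K : NNReal} {ψ f g h φ N F : ℝ → ℝ}

lemma abs_sub_mul_le_of_abs_le_cubicDecay {x : ℝ} (hε : 0 < ε) (hc : 1 ≤ c) (hC₁ : 0 ≤ C₁)
    (hD : 0 ≤ D) (hN_le : ∀ x, |N x| ≤ C₂)
    (hN_near : c * |x| ≤ √ε → |N x - N 0| ≤ C₁ * (|x| + ε)) (hF_le : |F x| ≤ D * cubicDecay ε x) :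
    |(N x - N 0) * F x| ≤
      2 * C₁ * D * poissonKer ε x + 4 * c ^ 3 * C₂ * D * poissonKer √ε x := by
  have hC₂ : 0 ≤ C₂ := (abs_nonneg _).trans (hN_le 0)
  have hP := poissonKer_nonneg hε.le x
  have hP' := poissonKer_nonneg (Real.sqrt_nonneg ε) x
  rw [abs_mul]
  rcases le_or_gt (c * |x|) √ε with h_near | h_far
  · calc |N x - N 0| * |F x| ≤ C₁ * (|x| + ε) * (D * cubicDecay ε x) := by
          gcongr ?_ * ?_
          exact hN_near h_near
      _ = C₁ * D * ((|x| + ε) * cubicDecay ε x) := by ring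
      _ ≤ C₁ * D * (2 * poissonKer ε x) :=
          mul_le_mul_of_nonneg_left (abs_add_mul_cubicDecay_le hε x) (by positivity)
      _ = 2 * C₁ * D * poissonKer ε x := by ring
      _ ≤ _ := le_add_of_nonneg_right (by positivity)
  · calc |N x - N 0| * |F x| ≤ (C₂ + C₂) * (D * (2 * c ^ 3 * poissonKer √ε x)) := by
          gcongr ?_ * ?_
          · exact (abs_sub _ _).trans (add_le_add (hN_le x) (hN_le 0))
          · refine hF_le.trans ?_
            gcongr
            exact cubicDecay_le_poissonKer_sqrt hε hc h_far.le
      _ = 4 * c ^ 3 * C₂ * D * poissonKer √ε x := by ring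
      _ ≤ _ := le_add_of_nonneg_left (by positivity)

lemma abs_integral_mul_le_of_integral_eq_zero (hε : 0 < ε) (hc : 1 ≤ c) (hD : 0 ≤ D)
    (hN : Measurable N) (hN_le : ∀ x, |N x| ≤ C₂)
    (hN_near : ∀ x, c * |x| ≤ √ε → |N x - N 0| ≤ C₁ * (|x| + ε))
    (hF : Integrable F) (hF_zero : ∫ x, F x = 0) (hF_le : ∀ x, |F x| ≤ D * cubicDecay ε x) :
    |∫ x, N x * F x| ≤ (2 * C₁ + 4 * c ^ 3 * C₂) * D * π := by
  have hs : 0 < √ε := Real.sqrt_pos.2 hε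
  have hC₁ : 0 ≤ C₁ := by
    have h := (abs_nonneg _).trans (hN_near 0 (by rw [abs_zero, mul_zero]; exact hs.le))
    rw [abs_zero, zero_add] at h
    exact nonneg_of_mul_nonneg_left h hε
  have h_mean : ∫ x, N x * F x = ∫ x, (N x - N 0) * F x := by
    simp only [sub_mul]
    rw [integral_sub (hF.bdd_mul hN.aestronglyMeasurable (.of_forall hN_le)) (hF.const_mul _),
      integral_const_mul, hF_zero, mul_zero, sub_zero]
  have h_int := (integrable_poissonKer hε).const_mul (2 * C₁ * D)
  have h_int' := (integrable_poissonKer hs).const_mul (4 * c ^ 3 * C₂ * D)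
  rw [h_mean]
  refine (norm_integral_le_of_norm_le (f := fun x ↦ (N x - N 0) * F x) (h_int.add h_int')
    (.of_forall fun x ↦ abs_sub_mul_le_of_abs_le_cubicDecay hε hc hC₁ hD hN_le (hN_near x)
      (hF_le x))).trans_eq ?_
  simp only [Pi.add_apply]
  rw [integral_add h_int h_int', integral_const_mul, integral_const_mul, integral_poissonKer hε,
    integral_poissonKer hs]
  ring

lemma one_le_log_one_div (hε : 0 < ε) (hε1 : ε ≤ 1 / 100) : 1 ≤ log (1 / ε) := by
  rw [Real.le_log_iff_exp_le (by positivity), le_div_iff₀ hε]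
  nlinarith [Real.exp_one_lt_d9]

namespace TamePair

lemma abs_integral_Mop_sub_T3_mul_Hstar_le (hfg : TamePair A ε f g) (hψ : IsLipschitzCutoff K ψ)
    (hA : 1 ≤ A) (hε : 0 < ε) (hε1 : ε ≤ 1 / 100) (hh : Measurable h) (hM : ∀ x, |h x| ≤ M)
    (hφ : IsTestFun ε φ) :
    |∫ α, (Mop ψ ε f g h α - T3 ψ ε f g h α) * Hstar ψ ε f g φ α| ≤
      45 * 10 ^ 13 * π * A ^ 4 * (1 + K) ^ 2 * ε * log (1 / ε) * M := by
  have hε1' : ε ≤ 1 := by linarith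
  have hM0 : 0 ≤ M := (abs_nonneg _).trans (hM 0)
  have h_log := one_le_log_one_div hε hε1
  have h_pair := abs_integral_mul_le_of_integral_eq_zero hε (c := 2 ^ 8) (by norm_num)
    (by positivity : 0 ≤ 90000 * A ^ 2 * (1 + K) * ε)
    (measurable_Mop_sub_T3 hψ hA hε hfg hh hM) (abs_Mop_sub_T3_le hψ hA hε hfg hh hM)
    (fun α hα ↦ abs_Mop_sub_T3_sub_le hψ hA hε hε1 hfg hh hM (by linarith))
    (integrable_Hstar hψ hA hε hε1' hfg hφ) (integral_Hstar_eq_zero hψ hA hε hε1' hfg hφ)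
    (abs_Hstar_le hψ hA hε hε1' hfg hφ)
  have h_const : A * M ≤ A ^ 2 * (1 + K) * M * log (1 / ε) := by
    calc A * M = A * 1 * M * 1 := by ring
      _ ≤ A ^ 2 * (1 + K) * M * log (1 / ε) := by
          gcongr
          · exact le_self_pow₀ hA two_ne_zero
          · exact le_add_of_nonneg_right K.coe_nonneg
  refine h_pair.trans ?_
  calc _ = (4 * 10 ^ 9 * (A ^ 2 * (1 + K) * M * log (1 / ε)) + 40 * 2 ^ 24 * (A * M)) *
        (90000 * A ^ 2 * (1 + K) * ε) * π := by ring
    _ ≤ (4 * 10 ^ 9 * (A ^ 2 * (1 + K) * M * log (1 / ε)) +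
          10 ^ 9 * (A ^ 2 * (1 + K) * M * log (1 / ε))) *
        (90000 * A ^ 2 * (1 + K) * ε) * π := by
        gcongr
        norm_num
    _ = _ := by ring

end TamePair

lemma Mop_sub_T3_mul_Hstar_congr {f' g' h' : ℝ → ℝ} (hψ : IsLipschitzCutoff K ψ) (hε : 0 < ε)
    (hf : EqOn f f' (Ioo (-(2 * √ε)) (2 * √ε))) (hg : EqOn g g' (Ioo (-(2 * √ε)) (2 * √ε)))
    (hh : EqOn h h' (Ioo (-(2 * √ε)) (2 * √ε))) (φ : ℝ → ℝ) (α : ℝ) :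
    (Mop ψ ε f g h α - T3 ψ ε f g h α) * Hstar ψ ε f g φ α =
      (Mop ψ ε f' g' h' α - T3 ψ ε f' g' h' α) * Hstar ψ ε f' g' φ α := by
  have hs : 0 < √ε := Real.sqrt_pos.2 hε
  rw [Hstar_congr hψ hε hf hg φ]
  by_cases hα : √ε / 2 ^ 5 < |α|
  · rw [Hstar_eq_zero hψ hε φ hα, mul_zero, mul_zero]
  · rw [Mop_congr hψ hε hf hg hh, T3_congr hψ hε hf hg hh (by linarith)]

lemma abs_integral_Mop_sub_T3_mul_Hstar_le (hψ : IsLipschitzCutoff K ψ) (hA : 1 ≤ A) (hε : 0 < ε)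
    (hε1 : ε ≤ 1 / 100) (hf : FlatOn A (Icc (-(2 * √ε)) (2 * √ε)) f)
    (hg : FlatOn A (Icc (-(2 * √ε)) (2 * √ε)) g)
    (hfg : ∀ x ∈ Icc (-(2 * √ε)) (2 * √ε), ∀ y ∈ Icc (-(2 * √ε)) (2 * √ε), -ε ≤ f x + g y)
    (hh : Measurable h) (hM : ∀ x ∈ Ioo (-(2 * √ε)) (2 * √ε), |h x| ≤ M) (hφ : IsTestFun ε φ) :
    |∫ α, (Mop ψ ε f g h α - T3 ψ ε f g h α) * Hstar ψ ε f g φ α| ≤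
      45 * 10 ^ 13 * π * A ^ 4 * (1 + K) ^ 2 * ε * log (1 / ε) * M := by
  have hs : 0 < √ε := Real.sqrt_pos.2 hε
  have hM0 : 0 ≤ M := (abs_nonneg _).trans (hM 0 ⟨by linarith, by linarith⟩)
  let p (x : ℝ) : ℝ := projIcc (-(2 * √ε)) (2 * √ε) (neg_le_self (by positivity)) x
  have h_eqOn (u : ℝ → ℝ) : EqOn u (fun x ↦ u (p x)) (Ioo (-(2 * √ε)) (2 * √ε)) := fun x hx ↦
    congrArg u (congrArg Subtype.val (projIcc_of_mem _ (Ioo_subset_Icc_self hx))).symm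
  have h_ind : EqOn h ((Ioo (-(2 * √ε)) (2 * √ε)).indicator h) (Ioo (-(2 * √ε)) (2 * √ε)) :=
    fun x hx ↦ (indicator_of_mem hx h).symm
  have h_ind_le (x : ℝ) : |(Ioo (-(2 * √ε)) (2 * √ε)).indicator h x| ≤ M := by
    by_cases hx : x ∈ Ioo (-(2 * √ε)) (2 * √ε)
    · rw [indicator_of_mem hx]
      exact hM x hx
    · rwa [indicator_of_notMem hx, abs_zero]
  have h_pair := (hf.tamePair_comp_projIcc (by linarith) hε.le hg hfg)
    |>.abs_integral_Mop_sub_T3_mul_Hstar_le hψ hA hε hε1 (hh.indicator measurableSet_Ioo) h_ind_le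
      hφ
  simpa only [Mop_sub_T3_mul_Hstar_congr hψ hε (h_eqOn f) (h_eqOn g) h_ind φ] using h_pair

end Pairing

lemma GoodFG.flatOn {δ A ε : ℝ} {f g : ℝ → ℝ} (hδ : 0 < δ) (hfg : GoodFG δ A ε f g) :
    FlatOn A (Ioo (-δ) δ) f ∧ FlatOn A (Ioo (-δ) δ) g := by
  obtain ⟨hf, hg, hf0, hg0, hf1, hg1, h_deriv, -⟩ := hfg
  have h_zero : (0 : ℝ) ∈ Ioo (-δ) δ := ⟨neg_neg_of_pos hδ, hδ⟩
  have h_two : (2 : WithTop ℕ∞) ≤ 5 := by norm_num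
  exact ⟨flatOn_of_abs_iteratedDerivWithin_le isOpen_Ioo (convex_Ioo _ _) h_zero (hf.of_le h_two)
      hf0 hf1 fun x hx ↦ (le_add_of_nonneg_right (abs_nonneg _)).trans (h_deriv x hx 2 (by simp)),
    flatOn_of_abs_iteratedDerivWithin_le isOpen_Ioo (convex_Ioo _ _) h_zero (hg.of_le h_two)
      hg0 hg1 fun x hx ↦ (le_add_of_nonneg_left (abs_nonneg _)).trans (h_deriv x hx 2 (by simp))⟩

lemma GoodFG.flatOn_Icc_two_mul_sqrt {δ A ε : ℝ} {f g : ℝ → ℝ} (hδ : 0 < δ) (hε : 0 < ε)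
    (hεδ : ε ≤ δ ^ 2 / 100) (hfg : GoodFG δ A ε f g) :
    FlatOn A (Icc (-(2 * √ε)) (2 * √ε)) f ∧ FlatOn A (Icc (-(2 * √ε)) (2 * √ε)) g ∧
      ∀ x ∈ Icc (-(2 * √ε)) (2 * √ε), ∀ y ∈ Icc (-(2 * √ε)) (2 * √ε), -ε ≤ f x + g y := by
  have hs : 0 < √ε := Real.sqrt_pos.2 hε
  have h_sqrt : √ε ≤ δ / 10 := Real.sqrt_le_iff.2 ⟨by positivity, by linarith⟩
  have h_sub : Icc (-(2 * √ε)) (2 * √ε) ⊆ Ioo (-δ) δ :=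
    Icc_subset_Ioo (by linarith) (by linarith)
  have h_sub_four : Icc (-(2 * √ε)) (2 * √ε) ⊆ Ioo (-(4 * √ε)) (4 * √ε) :=
    Icc_subset_Ioo (by linarith) (by linarith)
  obtain ⟨hf, hg⟩ := hfg.flatOn hδ
  obtain ⟨-, -, -, -, -, -, -, h_lower⟩ := hfg
  exact ⟨hf.mono h_sub, hg.mono h_sub,
    fun x hx y hy ↦ h_lower x (h_sub_four hx) y (h_sub_four hy)⟩

theorem M_minus_T3_Znorm_bound_general {K : NNReal} {A ε M : ℝ} {ψ f g h φ : ℝ → ℝ}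
    (hψ : IsLipschitzCutoff K ψ) (hA : 1 ≤ A) (hε : 0 < ε) (hε1 : ε ≤ 1 / 100)
    (hf : FlatOn A (Icc (-(2 * √ε)) (2 * √ε)) f) (hg : FlatOn A (Icc (-(2 * √ε)) (2 * √ε)) g)
    (hfg : ∀ x ∈ Icc (-(2 * √ε)) (2 * √ε), ∀ y ∈ Icc (-(2 * √ε)) (2 * √ε), -ε ≤ f x + g y)
    (hh : Measurable h) (hM : ∀ x ∈ Ioo (-(2 * √ε)) (2 * √ε), |h x| ≤ M) (hφ : IsTestFun ε φ) :
    |∫ α, (Mop ψ ε f g h α - T3 ψ ε f g h α) * Hstar ψ ε f g φ α| +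
        |∫ α, (Mop ψ ε f g h α - T3 ψ ε g f h α) * Hstar ψ ε f g φ α| ≤
      9 * 10 ^ 14 * π * A ^ 4 * (1 + K) ^ 2 * ε * log (1 / ε) * M := by
  have h_pair := abs_integral_Mop_sub_T3_mul_Hstar_le hψ hA hε hε1 hf hg hfg hh hM hφ
  have h_swap := abs_integral_Mop_sub_T3_mul_Hstar_le hψ hA hε hε1 hg hf
    (fun x hx y hy ↦ (hfg y hy x hx).trans_eq (add_comm _ _)) hh hM hφ
  rw [Mop_comm, Hstar_comm] at h_swap
  linarith

/-- **Z-norm comparison of `M` and `T₃` (Lemma 3.3(i), estimate (3.21)).**  For every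
`h ∈ L∞(I_δ)`, `‖(M − T_{3,(f,g)})h‖_Z + ‖(M − T_{3,(g,f)})h‖_Z ≲ ε log(1/ε) ‖h‖_{L∞(I_{2√ε})}`,
i.e. for every `φ ∈ C₂` both pairings against `H*φ` are bounded by `C ε log(1/ε) M` whenever
`|h| ≤ M` on `I_{2√ε}`, with `C` depending only on `A`, `δ` (and `ψ`). -/
theorem M_minus_T3_Znorm_bound (δ A : ℝ) (hδ : δ ∈ Ioc (0:ℝ) (1/100)) (hA : 1 ≤ A)
    (ψ : ℝ → ℝ) (hψ : IsCutoff ψ) :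
    ∃ C : ℝ, 0 < C ∧
      ∀ ε : ℝ, ε ∈ Ioc (0:ℝ) (δ ^ 2 / 100) →
      ∀ f g : ℝ → ℝ, GoodFG δ A ε f g →
      ∀ h : ℝ → ℝ, Measurable h → (∃ M' : ℝ, ∀ x ∈ Ioo (-δ) δ, |h x| ≤ M') →
        ∀ M : ℝ, (∀ x ∈ Ioo (-(2 * Real.sqrt ε)) (2 * Real.sqrt ε), |h x| ≤ M) →
          ∀ φ : ℝ → ℝ, InC2 δ ε φ →
            |∫ α : ℝ, (Mop ψ ε f g h α - T3 ψ ε f g h α) * Hstar ψ ε f g φ α| +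
              |∫ α : ℝ, (Mop ψ ε f g h α - T3 ψ ε g f h α) * Hstar ψ ε f g φ α| ≤
              C * ε * Real.log (1 / ε) * M := by
  obtain ⟨K, hK⟩ := hψ.exists_isLipschitzCutoff
  refine ⟨9 * 10 ^ 14 * π * A ^ 4 * (1 + K) ^ 2, by positivity,
    fun ε ⟨hε, hεδ⟩ f g hfg h h_meas _ M hM φ hφ ↦ ?_⟩
  obtain ⟨hf, hg, h_lower⟩ := hfg.flatOn_Icc_two_mul_sqrt hδ.1 hε hεδ
  exact M_minus_T3_Znorm_bound_general hK hA hε (by nlinarith [hδ.1, hδ.2]) hf hg h_lower h_meas hM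
    (hφ.isTestFun hε.le)
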